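/- arXiv:math/0007075 — 4 statements merged into one kernel-verified Lean document; each statement's English description precedes it below -/
import Mathlib

section
/- Let f = p/q be a rational function of two real variables bounded near (x₀,y₀) and let d ∈ D_f((x₀,y₀)) be any limiting value of f at (x₀,y₀). Then there exists a function Φ of type (i) such that at least one of the following four one-sided limits exists and equals d: lim_{x→x₀⁺} f(x, y₀+Φ(x−x₀)), lim_{x→x₀⁻} f(x, y₀+Φ(x−x₀)), lim_{y→y₀⁺} f(x₀+Φ(y−y₀), y), lim_{y→y₀⁻} f(x₀+Φ(y−y₀), y). -/
open MvPolynomial Filter Topology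

/-- Evaluation of a two-variable real polynomial at a point of `ℝ²`. -/
noncomputable def pev (p : MvPolynomial (Fin 2) ℝ) (v : ℝ × ℝ) : ℝ :=
  MvPolynomial.eval ![v.1, v.2] p

/-- `p/q` is bounded near `v₀`. -/
def BoundedNear (p q : MvPolynomial (Fin 2) ℝ) (v₀ : ℝ × ℝ) : Prop :=
  ∃ U ∈ nhds v₀, ∃ M : ℝ, ∀ v ∈ U, pev q v ≠ 0 → |pev p v / pev q v| ≤ M

/-- The set of limiting values of `p/q` at `v₀`. -/
def LimVals (p q : MvPolynomial (Fin 2) ℝ) (v₀ : ℝ × ℝ) : Set ℝ :=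
  {d | ∃ v : ℕ → ℝ × ℝ, Filter.Tendsto v Filter.atTop (nhds v₀) ∧ (∀ n, v n ≠ v₀) ∧
    (∀ n, pev q (v n) ≠ 0) ∧
    Filter.Tendsto (fun n => pev p (v n) / pev q (v n)) Filter.atTop (nhds d)}

/-- `Φ` is a function of type (i). -/
def TypeI (Φ : ℝ → ℝ) : Prop :=
  ∃ (N : ℕ) (φ : Fin N → ℝ) (e : Fin N → ℚ),
    (∀ k, φ k ≠ 0) ∧ StrictMono e ∧ (∀ k, 1 ≤ e k) ∧
    ∀ t : ℝ, Φ t = ∑ k, φ k * |t| ^ ((e k : ℝ))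

open Polynomial in
lemma bezout_aux (a b : Polynomial (Polynomial ℝ)) (hb : b ≠ 0)
    (h : ∀ d, d ∣ a → d ∣ b → IsUnit d) :
    ∃ (u v : Polynomial (Polynomial ℝ)) (r : Polynomial ℝ), r ≠ 0 ∧
      u * a + v * b = Polynomial.C r := by
  let K := FractionRing (Polynomial ℝ)
  let R := Polynomial ℝ
  have hinj : Function.Injective (Polynomial.map (algebraMap R K)) :=
    Polynomial.map_injective _ (IsFractionRing.injective R K)
  have hcop : IsRelPrime (a.map (algebraMap R K)) (b.map (algebraMap R K)) := by
    intro D hDa hDb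
    have hD0 : D ≠ 0 := by
      rintro rfl
      rw [zero_dvd_iff] at hDb
      exact hb (hinj (by simpa using hDb))
    have : NormalizedGCDMonoid R := Classical.arbitrary _
    apply isUnit_or_eq_zero_of_isUnit_integerNormalization_primPart (R := R) hD0
    set D0 := (IsLocalization.integerNormalization (nonZeroDivisors R) D) with hD0def
    obtain ⟨c, c0, hc⟩ := IsLocalization.integerNormalization_spec (nonZeroDivisors R) D
    have hdv : D0.primPart.map (algebraMap R K) ∣ D := by
      have h1 : D0.primPart.map (algebraMap R K) ∣ D0.map (algebraMap R K) :=
        Polynomial.map_dvd _ D0.primPart_dvd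
      rw [hc, Algebra.smul_def, Polynomial.algebraMap_apply] at h1
      have hu : IsUnit (Polynomial.C (algebraMap R K c)) := by
        apply Polynomial.isUnit_C.2
        apply isUnit_iff_ne_zero.2
        have := nonZeroDivisors.ne_zero c0
        simpa using this
      exact (hu.dvd_mul_left).1 h1
    exact h _ (D0.isPrimitive_primPart.dvd_of_fraction_map_dvd_fraction_map (hdv.trans hDa))
      (D0.isPrimitive_primPart.dvd_of_fraction_map_dvd_fraction_map (hdv.trans hDb))
  obtain ⟨u, v, huv⟩ := hcop.isCoprime
  obtain ⟨c, c0, hc⟩ := IsLocalization.integerNormalization_spec (nonZeroDivisors R) u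
  obtain ⟨e, e0, he⟩ := IsLocalization.integerNormalization_spec (nonZeroDivisors R) v
  refine ⟨Polynomial.C e * IsLocalization.integerNormalization (nonZeroDivisors R) u,
    Polynomial.C c * IsLocalization.integerNormalization (nonZeroDivisors R) v, e * c,
    mul_ne_zero (nonZeroDivisors.ne_zero e0) (nonZeroDivisors.ne_zero c0), ?_⟩
  apply hinj
  rw [Algebra.smul_def, Polynomial.algebraMap_apply] at hc he
  simp only [Polynomial.map_add, Polynomial.map_mul, hc, he, Polynomial.map_C, map_mul]
  linear_combination (Polynomial.C (algebraMap R K e) * Polynomial.C (algebraMap R K c)) * huv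

open Polynomial in
lemma pev_equiv (a : Polynomial (Polynomial ℝ)) (x y : ℝ) :
    MvPolynomial.eval ![x, y] (Polynomial.Bivariate.equivMvPolynomial ℝ a) = a.evalEval x y := by
  have : ((MvPolynomial.eval ![x, y]).comp
      (Polynomial.Bivariate.equivMvPolynomial ℝ : Polynomial (Polynomial ℝ) →+* _)) =
      Polynomial.evalEvalRingHom x y := by
    ext <;> simp
  exact congrArg (fun f => f a) this

lemma bezout_mv (p q : MvPolynomial (Fin 2) ℝ) (hq : q ≠ 0)
    (h : ∀ d, d ∣ p → d ∣ q → IsUnit d) :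
    ∃ (u v : MvPolynomial (Fin 2) ℝ) (r : Polynomial ℝ), r ≠ 0 ∧
      ∀ x y, MvPolynomial.eval ![x, y] u * MvPolynomial.eval ![x, y] p +
       MvPolynomial.eval ![x, y] v * MvPolynomial.eval ![x, y] q = r.eval x := by
  let e := Polynomial.Bivariate.equivMvPolynomial ℝ
  obtain ⟨u, v, r, hr, huv⟩ := bezout_aux (e.symm p) (e.symm q) (by simpa using hq) (by
    intro d h1 h2
    have := h (e d) (by simpa using map_dvd e h1) (by simpa using map_dvd e h2)
    simpa using this)
  refine ⟨e u, e v, r, hr, fun x y => ?_⟩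
  have := congrArg (fun f => MvPolynomial.eval ![x, y] (e f)) huv
  simp only [map_add, map_mul, AlgEquiv.apply_symm_apply] at this
  rw [this, pev_equiv, Polynomial.evalEval_C]

/-- Bivariate polynomials `ℝ[t][z]`. -/
abbrev Biv := Polynomial (Polynomial ℝ)

/-- the filter `t → 0⁺`, `z → 0`. -/
noncomputable abbrev FF : Filter (ℝ × ℝ) := 𝓝[>] (0:ℝ) ×ˢ 𝓝 (0:ℝ)

/-- restriction to `t = 0`. -/
noncomputable def Zr (A : Biv) : Polynomial ℝ := A.map (Polynomial.evalRingHom 0)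

lemma Zr_coeff (A : Biv) (j : ℕ) : (Zr A).coeff j = (A.coeff j).coeff 0 := by
  simp [Zr, Polynomial.coeff_zero_eq_eval_zero]

lemma Zr_eval (A : Biv) (z : ℝ) : (Zr A).eval z = A.evalEval 0 z := by
  rw [Zr, Polynomial.eval_map, Polynomial.eval₂_evalRingHom]

lemma eval_eval (A : Biv) (g : Polynomial ℝ) (t : ℝ) :
    (A.eval g).eval t = A.evalEval t (g.eval t) := by
  rw [← Polynomial.eval₂_evalRingHom]
  exact Polynomial.hom_eval₂ A (RingHom.id _) (Polynomial.evalRingHom t) g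

lemma evalEval_sum' (A : Biv) (t z : ℝ) :
    A.evalEval t z = ∑ j ∈ Finset.range (A.natDegree + 1), (A.coeff j).eval t * z ^ j := by
  rw [Polynomial.evalEval, Polynomial.eval_eq_sum_range (p := A), Polynomial.eval_finsetSum]
  simp

lemma ev_cont (A : Biv) : Continuous fun v : ℝ × ℝ => A.evalEval v.1 v.2 := by
  simp_rw [evalEval_sum']
  refine continuous_finsetSum _ fun j _ => ?_
  exact ((A.coeff j).continuous.comp continuous_fst).mul (continuous_snd.pow j)

lemma FF_le : FF ≤ 𝓝 ((0:ℝ), (0:ℝ)) := by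
  rw [nhds_prod_eq]
  exact Filter.prod_mono nhdsWithin_le_nhds le_rfl

lemma X_dvd_of_Zr (A : Biv) (h : Zr A = 0) : Polynomial.C Polynomial.X ∣ A := by
  rw [Polynomial.C_dvd_iff_dvd_coeff]
  intro i
  rw [Polynomial.X_dvd_iff, ← Zr_coeff, h, Polynomial.coeff_zero]

lemma dvd_of_bound (A : Biv) (k : ℕ) (M : ℝ)
    (h : ∀ᶠ v in FF, |A.evalEval v.1 v.2| ≤ M * v.1 ^ k) :
    ∃ A1, A = Polynomial.C (Polynomial.X ^ k) * A1 := by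
  induction k with
  | zero => exact ⟨A, by simp⟩
  | succ k ih =>
    have hpos : ∀ᶠ v in FF, 0 < v.1 := (eventually_mem_nhdsWithin).prod_inl _
    have hlt : ∀ᶠ v in FF, v.1 < 1 :=
      ((gt_mem_nhds (show (0:ℝ) < 1 by norm_num)).filter_mono nhdsWithin_le_nhds).prod_inl _
    obtain ⟨A1, rfl⟩ := ih (by
      filter_upwards [h, hpos, hlt] with v h1 h2 h3
      have : 0 < v.1 ^ k := by positivity
      have hM : 0 ≤ M := by
        by_contra hM
        push Not at hM
        have h4 := (abs_nonneg _).trans h1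
        have : 0 < v.1 ^ (k+1) := by positivity
        nlinarith
      refine h1.trans ?_
      rw [pow_succ]
      apply mul_le_mul_of_nonneg_left _ hM
      nlinarith)
    have h2 : ∀ᶠ v in FF, |A1.evalEval v.1 v.2| ≤ M * v.1 := by
      filter_upwards [h, hpos] with v h1 h2
      simp only [Polynomial.evalEval_mul, Polynomial.evalEval_C, Polynomial.eval_pow,
        Polynomial.eval_X, abs_mul, abs_pow, abs_of_pos h2] at h1
      have : 0 < v.1 ^ k := by positivity
      rw [pow_succ] at h1
      nlinarith
    have h3 : ∀ᶠ z in 𝓝 (0:ℝ), (Zr A1).eval z = 0 := by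
      have h4 : ∀ᶠ v in 𝓝 (0:ℝ) ×ˢ 𝓝[>] (0:ℝ), |A1.evalEval v.2 v.1| ≤ M * v.2 :=
        Filter.eventually_swap_iff.1 h2
      filter_upwards [h4.curry] with z hz
      rw [Zr_eval]
      have c1 : Tendsto (fun t => |A1.evalEval t z|) (𝓝[>] 0) (𝓝 |A1.evalEval 0 z|) := by
        refine Tendsto.mono_left ?_ nhdsWithin_le_nhds
        exact (Continuous.tendsto
          ((ev_cont A1).comp (continuous_id.prodMk continuous_const)).abs 0)
      have c2 : Tendsto (fun t => M * t) (𝓝[>] 0) (𝓝 (M * 0)) := by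
        refine Tendsto.mono_left ?_ nhdsWithin_le_nhds
        exact Continuous.tendsto (by fun_prop) 0
      have := le_of_tendsto_of_tendsto c1 c2 hz
      rw [mul_zero] at this
      exact abs_eq_zero.1 (le_antisymm this (abs_nonneg _))
    have h5 : Zr A1 = 0 := by
      apply Polynomial.eq_zero_of_infinite_isRoot
      exact infinite_of_mem_nhds 0 h3
    obtain ⟨A2, rfl⟩ := X_dvd_of_Zr A1 h5
    exact ⟨A2, by rw [← mul_assoc, ← map_mul, pow_succ]⟩

lemma exists_strip (B : Biv) (hB : B ≠ 0) :
    ∃ k B1, B = Polynomial.C (Polynomial.X ^ k) * B1 ∧ Zr B1 ≠ 0 := by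
  have hf : FiniteMultiplicity (Polynomial.C Polynomial.X : Biv) B := by
    apply FiniteMultiplicity.of_not_isUnit _ hB
    rw [Polynomial.isUnit_C]
    exact Polynomial.not_isUnit_X
  obtain ⟨c, h1, h2⟩ := hf.exists_eq_pow_mul_and_not_dvd
  refine ⟨_, c, by rw [map_pow]; exact h1, fun h => h2 (X_dvd_of_Zr c h)⟩

lemma ev_taylor (A : Biv) (h : Polynomial ℝ) (t z : ℝ) :
    (Polynomial.taylor h A).evalEval t z = A.evalEval t (z + h.eval t) := by
  rw [Polynomial.evalEval, Polynomial.taylor_eval, eval_eval]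
  simp

/-- substitution `t = s^N`, `z = s^E w` -/
noncomputable def subst (N E : ℕ) (A : Biv) : Biv :=
  (A.map (Polynomial.expand ℝ N : Polynomial ℝ →+* Polynomial ℝ)).comp
    (Polynomial.C (Polynomial.X ^ E) * Polynomial.X)

lemma ev_subst (N E : ℕ) (A : Biv) (s w : ℝ) :
    (subst N E A).evalEval s w = A.evalEval (s ^ N) (s ^ E * w) := by
  rw [evalEval_sum' A, subst, Polynomial.evalEval, Polynomial.eval_comp, Polynomial.eval_map,
    Polynomial.eval₂_eq_sum_range, Polynomial.eval_finsetSum]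
  refine Finset.sum_congr rfl fun j _ => ?_
  simp only [Polynomial.eval_mul, Polynomial.eval_pow, RingHom.coe_coe, Polynomial.expand_eval,
    Polynomial.eval_C, Polynomial.eval_X]

lemma subst_coeff (N E : ℕ) (A : Biv) (j : ℕ) :
    (subst N E A).coeff j = Polynomial.expand ℝ N (A.coeff j) * Polynomial.X ^ (E * j) := by
  rw [subst, Polynomial.comp_C_mul_X_coeff, Polynomial.coeff_map, pow_mul]
  rfl

lemma hensel (G : Biv) (h0 : (G.coeff 0).coeff 0 = 0) (h1 : (G.coeff 1).coeff 0 ≠ 0) (L : ℕ) :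
    ∃ h : Polynomial ℝ, h.coeff 0 = 0 ∧ Polynomial.X ^ (L+1) ∣ G.eval h := by
  induction L with
  | zero =>
    refine ⟨0, by simp, ?_⟩
    rw [zero_add, pow_one, Polynomial.X_dvd_iff, ← Polynomial.coeff_zero_eq_eval_zero, h0]
  | succ L ih =>
    obtain ⟨h, hh, g, hg⟩ := ih
    set u := (G.coeff 1).coeff 0 with hu
    set δ : Polynomial ℝ := - (Polynomial.X ^ (L+1) * Polynomial.C (g.coeff 0 / u)) with hδ
    refine ⟨h + δ, by simp [hδ, hh], ?_⟩
    obtain ⟨k, hk⟩ := Polynomial.binomExpansion G h δ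
    have hd : ((Polynomial.derivative G).eval h).coeff 0 = u := by
      rw [Polynomial.coeff_zero_eq_eval_zero, eval_eval, ← Polynomial.coeff_zero_eq_eval_zero, hh,
        ← Zr_eval, ← Polynomial.coeff_zero_eq_eval_zero, Zr_coeff, Polynomial.coeff_derivative]
      simp [hu]
    have e1 : Polynomial.X ∣ g - (Polynomial.derivative G).eval h * Polynomial.C (g.coeff 0 / u) := by
      rw [Polynomial.X_dvd_iff]
      simp only [Polynomial.coeff_sub, Polynomial.mul_coeff_zero, hd, Polynomial.coeff_C_zero]
      field_simp
      simp
    obtain ⟨g', hg'⟩ := e1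
    have e2 : G.eval (h + δ) = Polynomial.X ^ (L+1+1) *
        (g' + k * Polynomial.X ^ L * Polynomial.C (g.coeff 0 / u) ^ 2) := by
      rw [hk, hg, hδ]
      linear_combination Polynomial.X ^ (L+1) * hg'
    rw [e2]
    exact dvd_mul_right _ _

lemma tschirnhaus (B : Biv) (m : ℕ) (h0 : (B.coeff m).coeff 0 = 0)
    (h1 : (B.coeff (m+1)).coeff 0 ≠ 0) (L : ℕ) :
    ∃ h : Polynomial ℝ, h.coeff 0 = 0 ∧
      Polynomial.X ^ (L+1) ∣ (Polynomial.taylor h B).coeff m := by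
  simp_rw [Polynomial.taylor_coeff]
  apply hensel
  · simp [Polynomial.hasseDeriv_coeff, h0]
  · simp only [Polynomial.hasseDeriv_coeff, add_comm 1 m]
    rw [← Polynomial.C_eq_natCast, Polynomial.coeff_C_mul]
    apply mul_ne_zero _ h1
    simp
    positivity

lemma asym (A A1 : Biv) (N E m : ℕ) (hN : 0 < N)
    (hA : subst N E A = Polynomial.C (Polynomial.X ^ (E * m)) * A1)
    {ι : Type*} (l : Filter ι) (s w : ι → ℝ) (hs : Tendsto s l (𝓝[>] 0))
    (hw : Tendsto (fun n => |w n|) l atTop)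
    (hz : Tendsto (fun n => s n ^ E * w n) l (𝓝 0)) :
    Tendsto (fun n => A.evalEval (s n ^ N) (s n ^ E * w n) / (s n ^ E * w n) ^ m) l
      (𝓝 ((A.coeff m).coeff 0)) := by
  have hmon : ∀ i j, (A.coeff j).coeff i ≠ 0 → E * m ≤ N * i + E * j := by
    intro i j hij
    by_contra hlt
    push Not at hlt
    apply hij
    have h1 := congrArg (fun f => (f.coeff j).coeff (N * i + E * j)) hA
    simp only [subst_coeff, Polynomial.coeff_C_mul, Polynomial.coeff_mul_X_pow,
      Polynomial.coeff_X_pow_mul'] at h1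
    rw [if_neg (by omega), Polynomial.coeff_expand_mul' hN] at h1
    exact h1
  have hs0 : Tendsto s l (𝓝 0) := hs.mono_right nhdsWithin_le_nhds
  have hspos : ∀ᶠ n in l, 0 < s n := hs.eventually eventually_mem_nhdsWithin
  have hwpos : ∀ᶠ n in l, 0 < |w n| := hw.eventually (eventually_gt_atTop 0)
  have hwi : Tendsto (fun n => (w n)⁻¹) l (𝓝 0) := by
    rw [tendsto_zero_iff_abs_tendsto_zero]
    refine hw.inv_tendsto_atTop.congr fun n => ?_
    simp [Function.comp, abs_inv]
  have hexp : ∀ n, A.evalEval (s n ^ N) (s n ^ E * w n) / (s n ^ E * w n) ^ m =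
      ∑ j ∈ Finset.range (A.natDegree + 1), ∑ i ∈ Finset.range ((A.coeff j).natDegree + 1),
        (A.coeff j).coeff i * (s n ^ (N * i) * (s n ^ E * w n) ^ j / (s n ^ E * w n) ^ m) := by
    intro n
    rw [evalEval_sum', Finset.sum_div]
    refine Finset.sum_congr rfl fun j _ => ?_
    rw [Polynomial.eval_eq_sum_range, Finset.sum_mul, Finset.sum_div]
    refine Finset.sum_congr rfl fun i _ => ?_
    rw [pow_mul]; ring
  have hlim : (A.coeff m).coeff 0 =
      ∑ j ∈ Finset.range (A.natDegree + 1), ∑ i ∈ Finset.range ((A.coeff j).natDegree + 1),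
        (if j = m then (if i = 0 then (A.coeff j).coeff i else 0) else 0) := by
    have : ∀ j, ∑ i ∈ Finset.range ((A.coeff j).natDegree + 1),
        (if j = m then (if i = 0 then (A.coeff j).coeff i else 0) else 0) =
        if j = m then (A.coeff j).coeff 0 else 0 := by
      intro j
      split_ifs
      · rw [Finset.sum_ite_eq']; simp
      · simp
    simp_rw [this]
    rw [Finset.sum_ite_eq']
    split_ifs with h
    · rfl
    · rw [Finset.mem_range, not_lt] at h
      rw [Polynomial.coeff_eq_zero_of_natDegree_lt (p := A) (by omega), Polynomial.coeff_zero]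
  rw [hlim]
  simp_rw [hexp]
  refine tendsto_finsetSum _ fun j _ => tendsto_finsetSum _ fun i _ => ?_
  by_cases hij : (A.coeff j).coeff i = 0
  · simp [hij, tendsto_const_nhds]
  have hm := hmon i j hij
  have hsi : 0 < i → Tendsto (fun n => s n ^ (N * i)) l (𝓝 0) := by
    intro hi
    have := hs0.pow (N * i)
    rwa [zero_pow (by positivity)] at this
  have hsi' : ∀ k, ∃ a, Tendsto (fun n => s n ^ k) l (𝓝 a) := fun k => ⟨_, hs0.pow k⟩
  rcases lt_trichotomy j m with hlt | heq | hgt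
  · rw [if_neg (by omega)]
    obtain ⟨a, ha⟩ := hsi' (N * i + E * j - E * m)
    have h2 : Tendsto (fun n => s n ^ (N * i + E * j - E * m) * (w n)⁻¹ ^ (m - j)) l (𝓝 0) := by
      have := ha.mul (hwi.pow (m - j))
      rwa [zero_pow (by omega), mul_zero] at this
    have h3 := h2.const_mul ((A.coeff j).coeff i)
    rw [mul_zero] at h3
    refine h3.congr' ?_
    filter_upwards [hspos, hwpos] with n h4 h5
    have h5 : w n ≠ 0 := abs_pos.1 h5
    congr 1
    rw [eq_div_iff (by positivity)]
    have e1 : (s n ^ E * w n) ^ m = s n ^ (E * m) * (w n ^ j * w n ^ (m - j)) := by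
      rw [← pow_add, mul_pow, ← pow_mul]; congr 2; omega
    have e2 : s n ^ (N * i) * (s n ^ E * w n) ^ j = 
        s n ^ (N * i + E * j - E * m) * s n ^ (E * m) * w n ^ j := by
      rw [← pow_add, Nat.sub_add_cancel hm, pow_add, mul_pow, ← pow_mul]; ring
    rw [e1, e2, inv_pow]
    field_simp
  · subst heq
    rw [if_pos rfl]
    have hc : ∀ᶠ n in l, (A.coeff j).coeff i * s n ^ (N * i) = (A.coeff j).coeff i *
        (s n ^ (N * i) * (s n ^ E * w n) ^ j / (s n ^ E * w n) ^ j) := by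
      filter_upwards [hspos, hwpos] with n h4 h5
      have h5 : w n ≠ 0 := abs_pos.1 h5
      field_simp
    refine Tendsto.congr' hc ?_
    split_ifs with hi
    · subst hi; simp [tendsto_const_nhds]
    · have := (hsi (by omega)).const_mul ((A.coeff j).coeff i)
      rwa [mul_zero] at this
  · rw [if_neg (by omega)]
    obtain ⟨a, ha⟩ := hsi' (N * i)
    have h2 := (ha.mul (hz.pow (j - m))).const_mul ((A.coeff j).coeff i)
    rw [zero_pow (by omega), mul_zero, mul_zero] at h2
    refine h2.congr' ?_
    filter_upwards [hspos, hwpos] with n h4 h5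
    have h5 : w n ≠ 0 := abs_pos.1 h5
    congr 1
    rw [eq_div_iff (by positivity), mul_assoc, ← pow_add]
    congr 2; omega

lemma FF_pos : ∀ᶠ v in FF, 0 < v.1 := (eventually_mem_nhdsWithin).prod_inl _

lemma FF_lt_one : ∀ᶠ v in FF, v.1 < 1 :=
  ((gt_mem_nhds (show (0:ℝ) < 1 by norm_num)).filter_mono nhdsWithin_le_nhds).prod_inl _

lemma FF_tendsto {ι : Type*} {l : Filter ι} {f g : ι → ℝ} (h0 : ∀ᶠ n in l, 0 < f n)
    (h1 : Tendsto f l (𝓝 0)) (h2 : Tendsto g l (𝓝 0)) :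
    Tendsto (fun n => (f n, g n)) l FF :=
  (tendsto_nhdsWithin_iff.2 ⟨h1, h0⟩).prodMk h2

lemma FF_fst : Tendsto (fun v : ℝ × ℝ => v.1) FF (𝓝 0) :=
  tendsto_fst.mono_right nhdsWithin_le_nhds

lemma FF_snd : Tendsto (fun v : ℝ × ℝ => v.2) FF (𝓝 0) := tendsto_snd

lemma FF_subst (N E : ℕ) (hN : 0 < N) (hE : 0 < E) (w : ℝ) :
    Tendsto (fun v : ℝ × ℝ => (v.1 ^ N, v.1 ^ E * (v.2 + w))) FF FF := by
  apply FF_tendsto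
  · filter_upwards [FF_pos] with v hv
    positivity
  · have := FF_fst.pow N
    rwa [zero_pow hN.ne'] at this
  · have := (FF_fst.pow E).mul (FF_snd.add_const w)
    rwa [zero_pow hE.ne', zero_mul] at this

lemma FF_shift (h : Polynomial ℝ) (h0 : h.coeff 0 = 0) :
    Tendsto (fun v : ℝ × ℝ => (v.1, v.2 + h.eval v.1)) FF FF := by
  apply FF_tendsto FF_pos FF_fst
  have h1 : Tendsto (fun v : ℝ × ℝ => h.eval v.1) FF (𝓝 (h.eval 0)) :=
    (h.continuous.tendsto 0).comp FF_fst
  have := FF_snd.add h1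
  rwa [← Polynomial.coeff_zero_eq_eval_zero, h0, add_zero] at this

lemma rootMult_lt (β : Polynomial ℝ) (m : ℕ) (hdeg : β.natDegree ≤ m + 1)
    (hm : β.coeff (m+1) ≠ 0) (hm1 : β.coeff m = 0) (hj : ∃ j ≤ m, β.coeff j ≠ 0) (w : ℝ) :
    β.rootMultiplicity w < m + 1 := by
  have hβ : β ≠ 0 := by rintro rfl; simp at hm
  by_contra hlt
  push Not at hlt
  have hdvd : (Polynomial.X - Polynomial.C w) ^ (m+1) ∣ β :=
    (Polynomial.le_rootMultiplicity_iff hβ).1 hlt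
  obtain ⟨g, hg⟩ := hdvd
  have hg0 : g ≠ 0 := by rintro rfl; simp at hg; exact hβ hg
  have hmon : ((Polynomial.X - Polynomial.C w) ^ (m+1)).Monic :=
    (Polynomial.monic_X_sub_C w).pow _
  have hnd : g.natDegree = 0 := by
    have := hmon.natDegree_mul' hg0
    rw [← hg, (Polynomial.monic_X_sub_C w).natDegree_pow, Polynomial.natDegree_X_sub_C] at this
    omega
  obtain ⟨b, rfl⟩ := Polynomial.natDegree_eq_zero.1 hnd
  have hb : b ≠ 0 := by simpa using hg0
  have hc : ∀ k, β.coeff k = (-w) ^ (m + 1 - k) * ((m+1).choose k) * b := by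
    intro k
    rw [hg, Polynomial.coeff_mul_C, sub_eq_add_neg, ← Polynomial.C_neg,
      Polynomial.coeff_X_add_C_pow]
  have h1 := hc m
  rw [hm1] at h1
  have hw : w = 0 := by
    have h2 : m + 1 - m = 1 := by omega
    rw [h2, pow_one, eq_comm, mul_eq_zero, mul_eq_zero] at h1
    rcases h1 with (h1 | h1) | h1
    · linarith
    · exfalso
      rw [Nat.choose_succ_self_right] at h1
      norm_cast at h1
    · exact absurd h1 hb
  obtain ⟨j, hj1, hj2⟩ := hj
  apply hj2
  rw [hc, hw, neg_zero, zero_pow (by omega)]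
  ring

lemma newton (B : Biv) (m K : ℕ) (h0 : ∀ j ≤ m, (B.coeff j).coeff 0 = 0)
    (hm : (B.coeff (m+1)).coeff 0 ≠ 0) (hK : Polynomial.X ^ (K+1) ∣ B.coeff m)
    (hK0 : ¬ Polynomial.X ^ (K+1) ∣ B.coeff 0) :
    ∃ (N E : ℕ) (B1 : Biv), 0 < N ∧ 0 < E ∧
      subst N E B = Polynomial.C (Polynomial.X ^ (E * (m+1))) * B1 ∧ Zr B1 ≠ 0 ∧
      ∀ w, (Zr B1).rootMultiplicity w < m + 1 := by
  classical
  set N := (m+1).factorial with hNdef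
  have hN : 0 < N := Nat.factorial_pos _
  have hB0 : B.coeff 0 ≠ 0 := by
    intro h; rw [h] at hK0; exact hK0 (dvd_zero _)
  set S := (Finset.range (m+1)).filter (fun j => B.coeff j ≠ 0) with hS
  have hSne : S.Nonempty := ⟨0, by simp [hS, hB0]⟩
  set f : ℕ → ℕ := fun j => (B.coeff j).natTrailingDegree * (N / (m + 1 - j)) with hf
  obtain ⟨j0, hj0S, hj0⟩ := Finset.exists_min_image S f hSne
  have hfm : ∀ j ≤ m, f j * (m + 1 - j) = N * (B.coeff j).natTrailingDegree := by
    intro j hj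
    have : N / (m+1-j) * (m+1-j) = N :=
      Nat.div_mul_cancel (Nat.dvd_factorial (by omega) (by omega))
    rw [hf]
    simp only
    rw [mul_assoc, this, mul_comm]
  set E := f j0 with hE
  have hle : ∀ j ≤ m, B.coeff j ≠ 0 → E * (m + 1 - j) ≤ N * (B.coeff j).natTrailingDegree := by
    intro j hj hj'
    rw [← hfm j hj]
    exact Nat.mul_le_mul_right _ (hj0 j (by simp [hS, hj']; omega))
  have hj0m : j0 ≤ m ∧ B.coeff j0 ≠ 0 := by
    simp only [hS, Finset.mem_filter, Finset.mem_range] at hj0S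
    exact ⟨by omega, hj0S.2⟩
  have hEpos : 0 < E := by
    rw [hE, hf]
    apply Nat.mul_pos
    · rw [Nat.pos_iff_ne_zero, Polynomial.natTrailingDegree_ne_zero]
      exact ⟨hj0m.2, h0 j0 hj0m.1⟩
    · apply Nat.div_pos (Nat.le_of_dvd hN (Nat.dvd_factorial (by omega) (by omega))) (by omega)
  have ho : (B.coeff 0).natTrailingDegree ≤ K := by
    rw [Polynomial.X_pow_dvd_iff] at hK0
    push Not at hK0
    obtain ⟨i, hi, hi'⟩ := hK0
    exact (Polynomial.natTrailingDegree_le_of_ne_zero hi').trans (by omega)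
  have hEK : E < N * (K+1) := by
    have h1 := hle 0 (by omega) hB0
    have h2 : N * (B.coeff 0).natTrailingDegree ≤ N * K := Nat.mul_le_mul_left _ ho
    have h3 : E * 1 ≤ E * (m + 1 - 0) := Nat.mul_le_mul_left _ (by omega)
    rw [Nat.mul_add]; omega
  have hexp : ∀ (b : Polynomial ℝ) k, Polynomial.X ^ k ∣ b →
      Polynomial.X ^ (N * k) ∣ Polynomial.expand ℝ N b := by
    rintro b k ⟨g, rfl⟩
    rw [map_mul, map_pow, Polynomial.expand_X, ← pow_mul]
    exact dvd_mul_right _ _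
  have hdvd : Polynomial.C (Polynomial.X ^ (E * (m+1))) ∣ subst N E B := by
    rw [Polynomial.C_dvd_iff_dvd_coeff]
    intro j
    rw [subst_coeff]
    by_cases hj : m + 1 ≤ j
    · exact Dvd.dvd.mul_left (pow_dvd_pow _ (Nat.mul_le_mul_left _ hj)) _
    by_cases hbj : B.coeff j = 0
    · simp [hbj]
    have h1 := hexp (B.coeff j) (B.coeff j).natTrailingDegree (by
      rw [Polynomial.X_pow_dvd_iff]
      intro i hi
      exact Polynomial.coeff_eq_zero_of_lt_natTrailingDegree hi)
    have h2 := mul_dvd_mul h1 (dvd_refl (Polynomial.X ^ (E * j)))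
    rw [← pow_add] at h2
    refine (pow_dvd_pow _ ?_).trans h2
    have h3 := hle j (by omega) hbj
    have h4 : E * (m + 1) = E * (m + 1 - j) + E * j := by
      rw [← Nat.mul_add]; congr 1; omega
    omega
  obtain ⟨B1, hB1⟩ := hdvd
  have hZ : ∀ j, (Zr B1).coeff j =
      (Polynomial.expand ℝ N (B.coeff j) * Polynomial.X ^ (E * j)).coeff (E * (m+1)) := by
    intro j
    rw [← subst_coeff, hB1, Polynomial.coeff_C_mul, Zr_coeff, Polynomial.coeff_X_pow_mul']
    simp
  have hZm : (Zr B1).coeff (m+1) ≠ 0 := by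
    rw [hZ, Polynomial.coeff_mul_X_pow', if_pos le_rfl, Nat.sub_self]
    rw [Polynomial.coeff_expand hN]
    simpa using hm
  have hZlt : ∀ j ≤ m, (Zr B1).coeff j =
      (Polynomial.expand ℝ N (B.coeff j)).coeff (E * (m + 1 - j)) := by
    intro j hj
    rw [hZ, Polynomial.coeff_mul_X_pow', if_pos (Nat.mul_le_mul_left _ (by omega)), ← Nat.mul_sub]
  have hZne : Zr B1 ≠ 0 := by intro h; rw [h] at hZm; simp at hZm
  refine ⟨N, E, B1, hN, hEpos, hB1, hZne, ?_⟩
  apply rootMult_lt _ m _ hZm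
  · rw [hZlt m le_rfl]
    have h1 := hexp _ _ hK
    rw [Polynomial.X_pow_dvd_iff] at h1
    apply h1
    rw [show m + 1 - m = 1 by omega, mul_one]
    exact hEK
  · refine ⟨j0, hj0m.1, ?_⟩
    rw [hZlt j0 hj0m.1, hE, hfm j0 hj0m.1, Polynomial.coeff_expand_mul' hN]
    exact Polynomial.trailingCoeff_nonzero_iff_nonzero.2 hj0m.2
  · rw [Polynomial.natDegree_le_iff_coeff_eq_zero]
    intro j hj
    rw [hZ, Polynomial.coeff_mul_X_pow', if_neg]
    have := Nat.mul_lt_mul_of_pos_left hj hEpos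
    omega

/-- The hypotheses carried through the Newton process. -/
structure Good (d : ℝ) (l : Ultrafilter ℕ) (A B : Biv) (K : ℕ) (t z : ℕ → ℝ) : Prop where
  bd : ∃ M : ℝ, ∀ᶠ v in FF, |A.evalEval v.1 v.2| ≤ M * |B.evalEval v.1 v.2|
  low : ∃ c : ℝ, 0 < c ∧ ∀ᶠ v in FF, c * v.1 ^ K ≤ |B.evalEval v.1 v.2|
  ht : Tendsto t l (𝓝[>] 0)
  hz : Tendsto z l (𝓝 0)
  lim : Tendsto (fun n => A.evalEval (t n) (z n) / B.evalEval (t n) (z n)) l (𝓝 d)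

/-- The desired conclusion. -/
def Concl (d : ℝ) (A B : Biv) : Prop :=
  ∃ (N : ℕ) (φ : Polynomial ℝ), 0 < N ∧
    Tendsto (fun s => A.evalEval (s ^ N) (φ.eval s) / B.evalEval (s ^ N) (φ.eval s))
      (𝓝[>] 0) (𝓝 d)

lemma ultra_dich (l : Ultrafilter ℕ) (w : ℕ → ℝ) :
    (∃ a, Tendsto w l (𝓝 a)) ∨ Tendsto (fun n => |w n|) l atTop := by
  by_cases h : ∃ R, ∀ᶠ n in l, |w n| ≤ R
  · obtain ⟨R, hR⟩ := h
    left
    have h1 : ((l.map w : Ultrafilter ℝ) : Filter ℝ) ≤ 𝓟 (Set.Icc (-R) R) := by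
      rw [le_principal_iff, Ultrafilter.mem_coe, Ultrafilter.mem_map]
      filter_upwards [hR] with n hn
      exact abs_le.1 hn
    obtain ⟨a, _, ha⟩ := isCompact_Icc.ultrafilter_le_nhds _ h1
    exact ⟨a, ha⟩
  · right
    push Not at h
    rw [tendsto_atTop]
    intro R
    exact (h R).mono fun n hn => hn.le

lemma key_step (d : ℝ) (l : Ultrafilter ℕ) (m : ℕ)
    (ih : ∀ m' ≤ m, ∀ (A B : Biv) (K : ℕ) (t z : ℕ → ℝ), Zr B ≠ 0 →
      (Zr B).natTrailingDegree = m' → Good d l A B K t z → Concl d A B)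
    (A B : Biv) (K : ℕ) (t z : ℕ → ℝ) (hB : Zr B ≠ 0) (hBm : (Zr B).natTrailingDegree = m + 1)
    (hK : Polynomial.X ^ (K+1) ∣ B.coeff m) (hG : Good d l A B K t z) : Concl d A B := by
  obtain ⟨⟨M, hM⟩, ⟨c, hc, hlow⟩, ht, hz, hlim⟩ := hG
  have hK0 : ¬ Polynomial.X ^ (K+1) ∣ B.coeff 0 := by
    rintro ⟨g, hg⟩
    have h1 : ∀ᶠ t in 𝓝[>] (0:ℝ), c ≤ t * |g.eval t| := by
      filter_upwards [hlow.curry, eventually_mem_nhdsWithin] with t h2 h3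
      have h3 : 0 < t := h3
      have h4 := h2.self_of_nhds
      simp only [Polynomial.evalEval, Polynomial.C_0] at h4
      rw [← Polynomial.coeff_zero_eq_eval_zero, hg] at h4
      simp only [Polynomial.eval_mul, Polynomial.eval_pow, Polynomial.eval_X, abs_mul, abs_pow,
        abs_of_pos h3] at h4
      have : 0 < t ^ K := by positivity
      rw [pow_succ] at h4
      by_contra h5
      push Not at h5
      nlinarith
    have h2 : Tendsto (fun t => t * |g.eval t|) (𝓝[>] (0:ℝ)) (𝓝 (0 * |g.eval 0|)) := by
      refine Tendsto.mono_left ?_ nhdsWithin_le_nhds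
      exact Continuous.tendsto (continuous_id.mul g.continuous.abs) 0
    have := ge_of_tendsto h2 h1
    linarith
  have hb : (B.coeff (m+1)).coeff 0 ≠ 0 := by
    rw [← Zr_coeff, ← hBm]
    exact Polynomial.trailingCoeff_nonzero_iff_nonzero.2 hB
  obtain ⟨N, E, B1, hN, hE, hB1, hZ, hmult⟩ := newton B m K (fun j hj => by
    rw [← Zr_coeff]
    exact Polynomial.coeff_eq_zero_of_lt_natTrailingDegree (by omega))
    hb hK hK0
  have hB1e : ∀ s w, B.evalEval (s ^ N) (s ^ E * w) = s ^ (E * (m+1)) * B1.evalEval s w := by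
    intro s w
    rw [← ev_subst, hB1, Polynomial.evalEval_mul, Polynomial.evalEval_C, Polynomial.eval_pow,
      Polynomial.eval_X]
  -- the numerator is divisible as well
  obtain ⟨A1, hA1⟩ : ∃ A1, subst N E A = Polynomial.C (Polynomial.X ^ (E * (m+1))) * A1 := by
    have hbd : ∀ᶠ v in FF, |B1.evalEval v.1 v.2| < |B1.evalEval 0 0| + 1 := by
      have h1 : Tendsto (fun v : ℝ × ℝ => |B1.evalEval v.1 v.2|) FF (𝓝 |B1.evalEval 0 0|) :=
        ((ev_cont B1).abs.tendsto (0, 0)).mono_left FF_le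
      exact h1.eventually (gt_mem_nhds (by linarith))
    apply dvd_of_bound _ _ (|M| * (|B1.evalEval 0 0| + 1))
    filter_upwards [hbd, (FF_subst N E hN hE 0).eventually hM, FF_pos] with v h1 h2 h3
    rw [add_zero, hB1e] at h2
    rw [ev_subst]
    refine h2.trans ?_
    rw [abs_mul, abs_of_pos (show 0 < v.1 ^ (E * (m+1)) by positivity)]
    have h4 : 0 < v.1 ^ (E * (m+1)) := by positivity
    calc M * (v.1 ^ (E * (m+1)) * |B1.evalEval v.1 v.2|)
        ≤ |M| * (v.1 ^ (E * (m+1)) * |B1.evalEval v.1 v.2|) :=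
          mul_le_mul_of_nonneg_right (le_abs_self M) (by positivity)
      _ ≤ |M| * (v.1 ^ (E * (m+1)) * (|B1.evalEval 0 0| + 1)) := by gcongr
      _ = _ := by ring
  have hA1e : ∀ s w, A.evalEval (s ^ N) (s ^ E * w) = s ^ (E * (m+1)) * A1.evalEval s w := by
    intro s w
    rw [← ev_subst, hA1, Polynomial.evalEval_mul, Polynomial.evalEval_C, Polynomial.eval_pow,
      Polynomial.eval_X]
  -- the new sequences
  set s : ℕ → ℝ := fun n => t n ^ ((N:ℝ)⁻¹) with hs
  set w : ℕ → ℝ := fun n => z n / s n ^ E with hw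
  have htpos : ∀ᶠ n in (l : Filter ℕ), 0 < t n := ht.eventually eventually_mem_nhdsWithin
  have hspos : ∀ᶠ n in (l : Filter ℕ), 0 < s n := by
    filter_upwards [htpos] with n hn
    exact Real.rpow_pos_of_pos hn _
  have hsN : ∀ᶠ n in (l : Filter ℕ), s n ^ N = t n := by
    filter_upwards [htpos] with n hn
    exact Real.rpow_inv_natCast_pow hn.le hN.ne'
  have hs0 : Tendsto s l (𝓝 0) := by
    have h1 : Tendsto t l (𝓝 0) := ht.mono_right nhdsWithin_le_nhds
    have h2 := h1.rpow_const (p := (N:ℝ)⁻¹) (Or.inr (by positivity))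
    rwa [Real.zero_rpow (by positivity)] at h2
  have hs' : Tendsto s l (𝓝[>] 0) := tendsto_nhdsWithin_iff.2 ⟨hs0, hspos⟩
  have hsw : ∀ᶠ n in (l : Filter ℕ), s n ^ E * w n = z n := by
    filter_upwards [hspos] with n hn
    rw [hw]; field_simp
  rcases ultra_dich l w with ⟨a, ha⟩ | hinf
  · skip
    set A2 := Polynomial.taylor (Polynomial.C a) A1 with hA2
    set B2 := Polynomial.taylor (Polynomial.C a) B1 with hB2
    have hA2e : ∀ s w, A2.evalEval s w = A1.evalEval s (w + a) := by
      intro s w; rw [hA2, ev_taylor]; simp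
    have hB2e : ∀ s w, B2.evalEval s w = B1.evalEval s (w + a) := by
      intro s w; rw [hB2, ev_taylor]; simp
    have hZ2 : Zr B2 = Polynomial.taylor a (Zr B1) := by
      rw [hB2, Zr, Polynomial.map_taylor]; simp [Zr]
    have hZ2n : Zr B2 ≠ 0 := by
      rw [hZ2]; intro h; exact hZ ((Polynomial.taylor_eq_zero _ _).1 h)
    have hdeg : (Zr B2).natTrailingDegree ≤ m := by
      rw [hZ2, Polynomial.taylor_apply, ← Polynomial.rootMultiplicity_eq_natTrailingDegree]
      have := hmult a; omega
    have hgood : Good d l A2 B2 (N * K) s (fun n => w n - a) := by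
      refine ⟨⟨M, ?_⟩, ⟨c, hc, ?_⟩, hs', ?_, ?_⟩
      · filter_upwards [(FF_subst N E hN hE a).eventually hM, FF_pos] with v h1 h2
        have h4 : 0 < v.1 ^ (E * (m+1)) := by positivity
        rw [hA1e, hB1e, abs_mul, abs_mul, abs_of_pos h4] at h1
        rw [hA2e, hB2e]
        by_contra h5
        push Not at h5
        nlinarith
      · filter_upwards [(FF_subst N E hN hE a).eventually hlow, FF_pos, FF_lt_one]
          with v h1 h2 h3
        have h4 : 0 < v.1 ^ (E * (m+1)) := by positivity
        have h5 : v.1 ^ (E * (m+1)) ≤ 1 := pow_le_one₀ h2.le h3.le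
        rw [hB1e, abs_mul, abs_of_pos h4, ← pow_mul] at h1
        rw [hB2e]
        refine h1.trans ?_
        exact mul_le_of_le_one_left (abs_nonneg _) h5
      · have := ha.sub_const a
        rwa [sub_self] at this
      · refine hlim.congr' ?_
        filter_upwards [hspos, hsN, hsw] with n h1 h2 h3
        have h4 : 0 < s n ^ (E * (m+1)) := by positivity
        rw [hA2e, hB2e, sub_add_cancel, ← h2, ← h3, hA1e, hB1e, mul_div_mul_left _ _ h4.ne']
    obtain ⟨N', φ, hN', hφ⟩ := ih _ hdeg A2 B2 _ _ _ hZ2n rfl hgood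
    refine ⟨N' * N, (Polynomial.X ^ N') ^ E * (φ + Polynomial.C a), by positivity, ?_⟩
    refine hφ.congr' ?_
    filter_upwards [eventually_mem_nhdsWithin] with r hr
    have hr : 0 < r := hr
    simp only [Polynomial.eval_mul, Polynomial.eval_pow, Polynomial.eval_X, Polynomial.eval_add,
      Polynomial.eval_C, pow_mul r N' N]
    have h4 : 0 < (r ^ N') ^ (E * (m+1)) := by positivity
    rw [hA1e, hB1e, hA2e, hB2e, mul_div_mul_left _ _ h4.ne']
  · skip
    have hsz : Tendsto (fun n => s n ^ E * w n) l (𝓝 0) := hz.congr' (hsw.mono fun n h => h.symm)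
    have hgen : ∀ {ι : Type} (l : Filter ι) (s w : ι → ℝ), Tendsto s l (𝓝[>] 0) →
        Tendsto (fun n => |w n|) l atTop → Tendsto (fun n => s n ^ E * w n) l (𝓝 0) →
        Tendsto (fun n => A.evalEval (s n ^ N) (s n ^ E * w n) /
          B.evalEval (s n ^ N) (s n ^ E * w n)) l
          (𝓝 ((A.coeff (m+1)).coeff 0 / (B.coeff (m+1)).coeff 0)) := by
      intro ι l s w h1 h2 h3
      have := (asym A A1 N E (m+1) hN hA1 l s w h1 h2 h3).div
        (asym B B1 N E (m+1) hN hB1 l s w h1 h2 h3) hb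
      refine this.congr' ?_
      filter_upwards [h1.eventually eventually_mem_nhdsWithin,
        h2.eventually (eventually_gt_atTop 0)] with n h4 h5
      have h4 : 0 < s n := h4
      have h5 : w n ≠ 0 := abs_pos.1 h5
      have h6 : (s n ^ E * w n) ^ (m+1) ≠ 0 := by positivity
      exact div_div_div_cancel_right₀ h6 _ _
    have hd : d = (A.coeff (m+1)).coeff 0 / (B.coeff (m+1)).coeff 0 := by
      refine tendsto_nhds_unique hlim ((hgen _ s w hs' hinf hsz).congr' ?_)
      filter_upwards [hsN, hsw] with n h2 h3
      rw [h2, h3]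
    refine ⟨2 * N, Polynomial.X ^ E, by positivity, ?_⟩
    rw [hd]
    have hid : Tendsto (fun r : ℝ => r) (𝓝[>] 0) (𝓝 0) := nhdsWithin_le_nhds
    have hpow : ∀ k, 0 < k → Tendsto (fun r : ℝ => r ^ k) (𝓝[>] 0) (𝓝 0) := by
      intro k hk
      have := hid.pow k
      rwa [zero_pow hk.ne'] at this
    have he : ∀ᶠ r : ℝ in 𝓝[>] 0, (r ^ 2) ^ E * (r ^ E)⁻¹ = r ^ E := by
      filter_upwards [eventually_mem_nhdsWithin] with r hr
      have hr : 0 < r := hr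
      rw [← pow_mul, mul_comm 2 E, pow_mul, sq]
      field_simp
    refine (hgen (𝓝[>] (0:ℝ)) (fun r => r ^ 2) (fun r => (r ^ E)⁻¹) ?_ ?_ ?_).congr' ?_
    · rw [tendsto_nhdsWithin_iff]
      refine ⟨hpow 2 (by norm_num), ?_⟩
      filter_upwards [eventually_mem_nhdsWithin] with r hr
      have hr : 0 < r := hr
      exact pow_pos hr 2
    · have h1 : Tendsto (fun r : ℝ => (r ^ E)⁻¹) (𝓝[>] 0) atTop := by
        apply Tendsto.inv_tendsto_nhdsGT_zero
        rw [tendsto_nhdsWithin_iff]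
        refine ⟨hpow E hE, ?_⟩
        filter_upwards [eventually_mem_nhdsWithin] with r hr
        have hr : 0 < r := hr
        exact pow_pos hr E
      exact tendsto_abs_atTop_atTop.comp h1
    · exact (hpow E hE).congr' (he.mono fun r h => h.symm)
    · filter_upwards [he] with r h
      rw [h, ← pow_mul, Polynomial.eval_pow, Polynomial.eval_X]

theorem key (d : ℝ) (l : Ultrafilter ℕ) : ∀ (m : ℕ) (A B : Biv) (K : ℕ) (t z : ℕ → ℝ), Zr B ≠ 0 →
      (Zr B).natTrailingDegree = m → Good d l A B K t z → Concl d A B := by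
  intro m
  induction m using Nat.strong_induction_on with
  | _ m ih =>
  intro A B K t z hB hBm hG
  rcases m with _ | m
  · have h0 : B.evalEval 0 0 ≠ 0 := by
      rw [← Zr_eval, ← Polynomial.coeff_zero_eq_eval_zero]
      have := Polynomial.trailingCoeff_nonzero_iff_nonzero.2 hB
      rwa [Polynomial.trailingCoeff, hBm] at this
    have hc : Tendsto (fun v : ℝ × ℝ => A.evalEval v.1 v.2 / B.evalEval v.1 v.2) FF
        (𝓝 (A.evalEval 0 0 / B.evalEval 0 0)) :=
      (((ev_cont A).tendsto (0, 0)).div ((ev_cont B).tendsto (0, 0)) h0).mono_left FF_le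
    have hd : d = A.evalEval 0 0 / B.evalEval 0 0 :=
      tendsto_nhds_unique hG.lim (hc.comp (hG.ht.prodMk hG.hz))
    refine ⟨1, 0, one_pos, ?_⟩
    rw [hd]
    have h1 : Tendsto (fun s : ℝ => (s, (0:ℝ))) (𝓝[>] 0) FF :=
      Tendsto.prodMk tendsto_id tendsto_const_nhds
    refine (hc.comp h1).congr fun s => ?_
    simp
  · obtain ⟨h, hh0, hh⟩ := tschirnhaus B m
      (by rw [← Zr_coeff]; exact Polynomial.coeff_eq_zero_of_lt_natTrailingDegree (by omega))
      (by rw [← Zr_coeff, ← hBm]; exact Polynomial.trailingCoeff_nonzero_iff_nonzero.2 hB) K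
    have hZ : Zr (Polynomial.taylor h B) = Zr B := by
      rw [Zr, Polynomial.map_taylor, Polynomial.coe_evalRingHom,
        ← Polynomial.coeff_zero_eq_eval_zero, hh0]
      simp [Zr]
    have hgood : Good d l (Polynomial.taylor h A) (Polynomial.taylor h B) K t
        (fun n => z n - h.eval (t n)) := by
      obtain ⟨⟨M, hM⟩, ⟨c, hc, hlow⟩, ht, hz, hlim⟩ := hG
      refine ⟨⟨M, ?_⟩, ⟨c, hc, ?_⟩, ht, ?_, ?_⟩
      · filter_upwards [(FF_shift h hh0).eventually hM] with v hv
        rwa [ev_taylor, ev_taylor]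
      · filter_upwards [(FF_shift h hh0).eventually hlow] with v hv
        rwa [ev_taylor]
      · have h1 : Tendsto (fun n => h.eval (t n)) l (𝓝 (h.eval 0)) :=
          (h.continuous.tendsto 0).comp (ht.mono_right nhdsWithin_le_nhds)
        have := hz.sub h1
        rwa [← Polynomial.coeff_zero_eq_eval_zero, hh0, sub_zero] at this
      · simpa [ev_taylor] using hlim
    obtain ⟨N, φ, hN, hφ⟩ := key_step d l m
      (fun m' hm' => ih m' (by omega)) _ _ K t _ (by rwa [hZ]) (by rwa [hZ]) hh hgood
    refine ⟨N, φ + Polynomial.expand ℝ N h, hN, ?_⟩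
    simpa [ev_taylor, Polynomial.expand_eval] using hφ

lemma typeI_poly (ψ : Polynomial ℝ) (N : ℕ) (hN : 0 < N) :
    TypeI (fun t => |t| * ψ.eval (|t| ^ ((N:ℝ)⁻¹))) := by
  refine ⟨ψ.support.card, fun k => ψ.coeff (ψ.support.orderEmbOfFin rfl k),
    fun k => 1 + (ψ.support.orderEmbOfFin rfl k : ℚ) / N, ?_, ?_, ?_, ?_⟩
  · intro k
    exact Polynomial.mem_support_iff.1 (Finset.orderEmbOfFin_mem _ _ k)
  · intro i j hij
    have h1 : ψ.support.orderEmbOfFin rfl i < ψ.support.orderEmbOfFin rfl j :=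
      (ψ.support.orderEmbOfFin rfl).strictMono hij
    have h2 : ((ψ.support.orderEmbOfFin rfl i : ℕ) : ℚ) < (ψ.support.orderEmbOfFin rfl j : ℕ) := by
      exact_mod_cast h1
    have h3 : (0:ℚ) < N := by exact_mod_cast hN
    simp only
    gcongr
  · intro k
    have : (0:ℚ) ≤ (ψ.support.orderEmbOfFin rfl k : ℚ) / N := by positivity
    linarith
  · intro t
    have h1 : ∀ i : ℕ, |t| * (|t| ^ ((N:ℝ)⁻¹)) ^ i = |t| ^ (1 + (i:ℝ) / N) := by
      intro i
      rw [Real.rpow_add_of_nonneg (abs_nonneg t) zero_le_one (by positivity), Real.rpow_one,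
        ← Real.rpow_natCast, ← Real.rpow_mul (abs_nonneg t)]
      congr 2
      ring
    have h2 : |t| * ψ.eval (|t| ^ ((N:ℝ)⁻¹)) =
        ∑ i ∈ ψ.support, ψ.coeff i * |t| ^ (1 + (i:ℝ) / N) := by
      rw [Polynomial.eval_eq_sum, Polynomial.sum_def, Finset.mul_sum]
      refine Finset.sum_congr rfl fun i _ => ?_
      rw [← h1]; ring
    refine h2.trans ?_
    have h3 : ∀ F : ℕ → ℝ, ∑ i ∈ ψ.support, F i =
        ∑ k : Fin ψ.support.card, F (ψ.support.orderEmbOfFin rfl k) := by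
      intro F
      have h4 := Finset.sum_map Finset.univ (ψ.support.orderEmbOfFin rfl).toEmbedding F
      rw [Finset.map_orderEmbOfFin_univ] at h4
      exact h4
    rw [h3]
    refine Finset.sum_congr rfl fun k _ => ?_
    push_cast
    rfl

lemma pev_cont (p : MvPolynomial (Fin 2) ℝ) : Continuous (pev p) := by
  unfold pev
  refine (MvPolynomial.continuous_eval p).comp ?_
  refine continuous_pi fun i => ?_
  fin_cases i
  · exact continuous_fst
  · exact continuous_snd

lemma bounded_ext (p q : MvPolynomial (Fin 2) ℝ) (hq : q ≠ 0) (v₀ : ℝ × ℝ)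
    (hb : BoundedNear p q v₀) :
    ∃ M : ℝ, ∀ᶠ v in 𝓝 v₀, |pev p v| ≤ M * |pev q v| := by
  obtain ⟨U, hU, M, hM⟩ := hb
  refine ⟨M, ?_⟩
  filter_upwards [eventually_mem_nhds_iff.2 hU] with v hv
  by_contra hlt
  push Not at hlt
  have hopen : ∀ᶠ w in 𝓝 v, M * |pev q w| < |pev p w| :=
    (continuous_const.mul (pev_cont q).abs).continuousAt.eventually_lt
      (pev_cont p).abs.continuousAt hlt
  have hz : ∀ᶠ w in 𝓝 v, pev q w = 0 := by
    filter_upwards [hopen, hv] with w h1 h2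
    by_contra h3
    have h4 := hM w h2 h3
    rw [abs_div, div_le_iff₀ (abs_pos.2 h3)] at h4
    linarith
  obtain ⟨a, b⟩ := v
  rw [nhds_prod_eq, Filter.eventually_prod_iff] at hz
  obtain ⟨pa, ha, pb, hpb, hab⟩ := hz
  apply hq
  have i1 : Set.Infinite {x | pa x} := infinite_of_mem_nhds a ha
  have i2 : Set.Infinite {x | pb x} := infinite_of_mem_nhds b hpb
  apply MvPolynomial.funext_set (s := ![{x | pa x}, {x | pb x}])
  · intro i
    fin_cases i
    · exact i1
    · exact i2
  · intro x hx
    have h1 := hx 0 (Set.mem_univ _)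
    have h2 := hx 1 (Set.mem_univ _)
    have := hab h1 h2
    rw [pev] at this
    rw [map_zero, ← this]
    congr 1
    congr 1
    ext i
    fin_cases i <;> rfl

/-- substitution `x = x₀ + σ t`, `y = y₀ + t (z + c)`. -/
noncomputable def initS (x₀ y₀ σ c : ℝ) : MvPolynomial (Fin 2) ℝ →ₐ[ℝ] Biv :=
  MvPolynomial.aeval ![Polynomial.C (Polynomial.C x₀ + Polynomial.C σ * Polynomial.X),
    Polynomial.C (Polynomial.C y₀) +
      Polynomial.C Polynomial.X * (Polynomial.X + Polynomial.C (Polynomial.C c))]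

lemma ev_initS (x₀ y₀ σ c : ℝ) (p : MvPolynomial (Fin 2) ℝ) (t z : ℝ) :
    (initS x₀ y₀ σ c p).evalEval t z = pev p (x₀ + σ * t, y₀ + t * (z + c)) := by
  have : (Polynomial.evalEvalRingHom t z).comp (initS x₀ y₀ σ c : MvPolynomial (Fin 2) ℝ →+* Biv) =
      MvPolynomial.eval ![x₀ + σ * t, y₀ + t * (z + c)] := by
    apply MvPolynomial.ringHom_ext
    · intro r
      simp [initS]
    · intro i
      fin_cases i
      · simp [initS]
      · simp [initS]
  exact congrArg (fun f => f p) this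

lemma low_poly (ρ : Polynomial ℝ) (h : ρ ≠ 0) :
    ∃ (K : ℕ) (c : ℝ), 0 < c ∧ ∀ᶠ t in 𝓝[>] (0:ℝ), c * t ^ K ≤ |ρ.eval t| := by
  obtain ⟨g, hg, hg0⟩ := Polynomial.exists_eq_pow_rootMultiplicity_mul_and_not_dvd ρ h 0
  rw [Polynomial.C_0, sub_zero] at hg hg0
  have h0 : g.eval 0 ≠ 0 := by
    rw [← Polynomial.coeff_zero_eq_eval_zero]
    exact fun h => hg0 (Polynomial.X_dvd_iff.2 h)
  generalize ρ.rootMultiplicity 0 = K at hg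
  refine ⟨K, |g.eval 0| / 2, by positivity, ?_⟩
  have h1 : ∀ᶠ t in 𝓝 (0:ℝ), |g.eval 0| / 2 < |g.eval t| :=
    (g.continuous.abs.tendsto 0).eventually (lt_mem_nhds (by
      have := abs_pos.2 h0; linarith))
  filter_upwards [h1.filter_mono nhdsWithin_le_nhds, eventually_mem_nhdsWithin] with t h2 h3
  have h3 : 0 < t := h3
  rw [hg, Polynomial.eval_mul, Polynomial.eval_pow, Polynomial.eval_X, abs_mul, abs_pow,
    abs_of_pos h3, mul_comm]
  gcongr

lemma main_x (p q : MvPolynomial (Fin 2) ℝ) (hq : q ≠ 0)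
    (hcop : ∀ d : MvPolynomial (Fin 2) ℝ, d ∣ p → d ∣ q → IsUnit d) (x₀ y₀ : ℝ)
    (hb : BoundedNear p q (x₀, y₀)) (d σ : ℝ) (hσ : σ * σ = 1) (l : Ultrafilter ℕ)
    (v : ℕ → ℝ × ℝ) (hv : Tendsto v l (𝓝 (x₀, y₀)))
    (hpos : ∀ᶠ n in (l : Filter ℕ), 0 < σ * ((v n).1 - x₀) ∧ |(v n).2 - y₀| ≤ σ * ((v n).1 - x₀))
    (hlim : Tendsto (fun n => pev p (v n) / pev q (v n)) l (𝓝 d)) :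
    ∃ Φ : ℝ → ℝ, TypeI Φ ∧ (∀ t, Φ |t| = Φ t) ∧
      Tendsto (fun t => pev p (x₀ + σ * t, y₀ + Φ t) / pev q (x₀ + σ * t, y₀ + Φ t))
        (𝓝[>] 0) (𝓝 d) := by
  have hσ0 : σ ≠ 0 := by rintro rfl; simp at hσ
  obtain ⟨M, hM⟩ := bounded_ext p q hq _ hb
  obtain ⟨f, g, r, hr, hfg⟩ := bezout_mv p q hq hcop
  -- sequences
  set t : ℕ → ℝ := fun n => σ * ((v n).1 - x₀) with ht
  set w : ℕ → ℝ := fun n => ((v n).2 - y₀) / t n with hw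
  have hv1 : Tendsto (fun n => (v n).1) l (𝓝 x₀) := (continuous_fst.tendsto _).comp hv
  have ht0 : Tendsto t l (𝓝 0) := by
    have := (hv1.sub_const x₀).const_mul σ
    rwa [sub_self, mul_zero] at this
  have ht' : Tendsto t l (𝓝[>] 0) := tendsto_nhdsWithin_iff.2 ⟨ht0, hpos.mono fun n h => h.1⟩
  have hw1 : ∀ᶠ n in (l : Filter ℕ), |w n| ≤ 1 := by
    filter_upwards [hpos] with n hn
    rw [hw]
    simp only
    rw [abs_div, abs_of_pos hn.1, div_le_one hn.1]
    exact hn.2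
  obtain ⟨c, hc⟩ : ∃ c, Tendsto w l (𝓝 c) := by
    rcases ultra_dich l w with h | h
    · exact h
    · exfalso
      obtain ⟨n, h1, h2⟩ := (hw1.and (h.eventually (eventually_gt_atTop 1))).exists
      linarith
  set A0 := initS x₀ y₀ σ c p with hA0
  set B0 := initS x₀ y₀ σ c q with hB0
  have hFF : Tendsto (fun u : ℝ × ℝ => (x₀ + σ * u.1, y₀ + u.1 * (u.2 + c))) FF (𝓝 (x₀, y₀)) := by
    have h1 : Continuous (fun u : ℝ × ℝ => (x₀ + σ * u.1, y₀ + u.1 * (u.2 + c))) := by fun_prop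
    have h2 := (h1.tendsto (0, 0)).mono_left FF_le
    simpa using h2
  have hM0 : ∀ᶠ u in FF, |A0.evalEval u.1 u.2| ≤ M * |B0.evalEval u.1 u.2| := by
    filter_upwards [hFF.eventually hM] with u hu
    rwa [hA0, hB0, ev_initS, ev_initS]
  obtain ⟨K, c0, hc0, hlow⟩ : ∃ (K : ℕ) (c0 : ℝ), 0 < c0 ∧
      ∀ᶠ u in FF, c0 * u.1 ^ K ≤ |B0.evalEval u.1 u.2| := by
    have hρ : r.comp (Polynomial.C x₀ + Polynomial.C σ * Polynomial.X) ≠ 0 := by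
      intro h
      apply hr
      apply Polynomial.funext
      intro x
      have := congrArg (Polynomial.eval (σ * (x - x₀))) h
      rw [Polynomial.eval_comp] at this
      simp only [Polynomial.eval_add, Polynomial.eval_C, Polynomial.eval_mul, Polynomial.eval_X,
        Polynomial.eval_zero] at this
      rw [← mul_assoc, hσ] at this
      simpa using this
    obtain ⟨K, c1, hc1, h1⟩ := low_poly _ hρ
    set D := (|pev f (x₀, y₀)| + 1) * |M| + (|pev g (x₀, y₀)| + 1) with hD
    have hDpos : 0 < D := by positivity
    refine ⟨K, c1 / D, by positivity, ?_⟩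
    have hf : ∀ᶠ u in 𝓝 (x₀, y₀), |pev f u| < |pev f (x₀, y₀)| + 1 :=
      ((pev_cont f).abs.tendsto _).eventually (gt_mem_nhds (by linarith))
    have hg : ∀ᶠ u in 𝓝 (x₀, y₀), |pev g u| < |pev g (x₀, y₀)| + 1 :=
      ((pev_cont g).abs.tendsto _).eventually (gt_mem_nhds (by linarith))
    filter_upwards [h1.prod_inl (𝓝 (0:ℝ)), hFF.eventually hf, hFF.eventually hg,
      hFF.eventually hM] with u h2 h3 h4 h5
    rw [hB0, ev_initS]
    rw [div_mul_eq_mul_div, div_le_iff₀ hDpos]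
    refine h2.trans ?_
    have h6 := hfg (x₀ + σ * u.1) (y₀ + u.1 * (u.2 + c))
    have h7 : (r.comp (Polynomial.C x₀ + Polynomial.C σ * Polynomial.X)).eval u.1 =
        r.eval (x₀ + σ * u.1) := by simp [Polynomial.eval_comp]
    rw [h7, ← h6]
    set P := (x₀ + σ * u.1, y₀ + u.1 * (u.2 + c)) with hP
    change |pev f P * pev p P + pev g P * pev q P| ≤ _
    calc |pev f P * pev p P + pev g P * pev q P|
        ≤ |pev f P| * |pev p P| + |pev g P| * |pev q P| := by
          rw [← abs_mul, ← abs_mul]; exact abs_add_le _ _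
      _ ≤ (|pev f (x₀, y₀)| + 1) * (|M| * |pev q P|) + (|pev g (x₀, y₀)| + 1) * |pev q P| := by
          have h8 : |pev p P| ≤ |M| * |pev q P| :=
            h5.trans (mul_le_mul_of_nonneg_right (le_abs_self M) (abs_nonneg _))
          gcongr
      _ = |pev q P| * D := by rw [hD]; ring
  have hB0n : B0 ≠ 0 := by
    intro h
    obtain ⟨u, h1, h2⟩ := (hlow.and FF_pos).exists
    rw [h, Polynomial.evalEval_zero, abs_zero] at h1
    have : 0 < c0 * u.1 ^ K := by positivity
    linarith
  obtain ⟨k, B1, hB1, hZ⟩ := exists_strip B0 hB0n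
  have hB1e : ∀ t z, B0.evalEval t z = t ^ k * B1.evalEval t z := by
    intro t z
    rw [hB1, Polynomial.evalEval_mul, Polynomial.evalEval_C, Polynomial.eval_pow,
      Polynomial.eval_X]
  obtain ⟨A1, hA1⟩ : ∃ A1, A0 = Polynomial.C (Polynomial.X ^ k) * A1 := by
    have hbd : ∀ᶠ v in FF, |B1.evalEval v.1 v.2| < |B1.evalEval 0 0| + 1 := by
      have h1 : Tendsto (fun v : ℝ × ℝ => |B1.evalEval v.1 v.2|) FF (𝓝 |B1.evalEval 0 0|) :=
        ((ev_cont B1).abs.tendsto (0, 0)).mono_left FF_le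
      exact h1.eventually (gt_mem_nhds (by linarith))
    apply dvd_of_bound _ _ (|M| * (|B1.evalEval 0 0| + 1))
    filter_upwards [hbd, hM0, FF_pos] with v h1 h2 h3
    rw [hB1e] at h2
    refine h2.trans ?_
    have h4 : 0 < v.1 ^ k := by positivity
    rw [abs_mul, abs_of_pos h4]
    calc M * (v.1 ^ k * |B1.evalEval v.1 v.2|)
        ≤ |M| * (v.1 ^ k * |B1.evalEval v.1 v.2|) :=
          mul_le_mul_of_nonneg_right (le_abs_self M) (by positivity)
      _ ≤ |M| * (v.1 ^ k * (|B1.evalEval 0 0| + 1)) := by gcongr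
      _ = _ := by ring
  have hA1e : ∀ t z, A0.evalEval t z = t ^ k * A1.evalEval t z := by
    intro t z
    rw [hA1, Polynomial.evalEval_mul, Polynomial.evalEval_C, Polynomial.eval_pow,
      Polynomial.eval_X]
  have hgood : Good d l A1 B1 K t (fun n => w n - c) := by
    refine ⟨⟨M, ?_⟩, ⟨c0, hc0, ?_⟩, ht', ?_, ?_⟩
    · filter_upwards [hM0, FF_pos] with v h1 h2
      have h4 : 0 < v.1 ^ k := by positivity
      rw [hA1e, hB1e, abs_mul, abs_mul, abs_of_pos h4] at h1
      by_contra h5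
      push Not at h5
      nlinarith
    · filter_upwards [hlow, FF_pos, FF_lt_one] with v h1 h2 h3
      have h4 : 0 < v.1 ^ k := by positivity
      have h5 : v.1 ^ k ≤ 1 := pow_le_one₀ h2.le h3.le
      rw [hB1e, abs_mul, abs_of_pos h4] at h1
      exact h1.trans (mul_le_of_le_one_left (abs_nonneg _) h5)
    · have := hc.sub_const c
      rwa [sub_self] at this
    · refine hlim.congr' ?_
      filter_upwards [hpos] with n hn
      have hn1 : 0 < t n := hn.1
      have h4 : 0 < t n ^ k := by positivity
      rw [← mul_div_mul_left (A1.evalEval (t n) (w n - c)) (B1.evalEval (t n) (w n - c)) h4.ne',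
        ← hA1e, ← hB1e, hA0, hB0, ev_initS, ev_initS]
      have e : (x₀ + σ * t n, y₀ + t n * (w n - c + c)) = v n := by
        have e1 : x₀ + σ * t n = (v n).1 := by
          rw [ht]; linear_combination ((v n).1 - x₀) * hσ
        have e2 : y₀ + t n * (w n - c + c) = (v n).2 := by
          have : t n * w n = (v n).2 - y₀ := by rw [hw]; field_simp
          linear_combination this
        rw [e1, e2]
      rw [e]
  obtain ⟨N, φ, hN, hφ⟩ := key d l _ A1 B1 K t _ hZ rfl hgood
  refine ⟨fun t => |t| * (φ + Polynomial.C c).eval (|t| ^ ((N:ℝ)⁻¹)), typeI_poly _ N hN,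
    fun t => by simp only [abs_abs], ?_⟩
  have hs : Tendsto (fun t : ℝ => t ^ ((N:ℝ)⁻¹)) (𝓝[>] 0) (𝓝[>] 0) := by
    rw [tendsto_nhdsWithin_iff]
    constructor
    · have hid : Tendsto (fun r : ℝ => r) (𝓝[>] 0) (𝓝 0) := nhdsWithin_le_nhds
      have h2 := hid.rpow_const (p := (N:ℝ)⁻¹) (Or.inr (by positivity))
      rwa [Real.zero_rpow (by positivity)] at h2
    · filter_upwards [eventually_mem_nhdsWithin] with r hr
      exact Real.rpow_pos_of_pos hr _
  refine (hφ.comp hs).congr' ?_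
  filter_upwards [eventually_mem_nhdsWithin] with x hx
  have hx : 0 < x := hx
  have h4 : 0 < x ^ k := by positivity
  simp only [Function.comp, abs_of_pos hx, Polynomial.eval_add, Polynomial.eval_C]
  rw [Real.rpow_inv_natCast_pow hx.le hN.ne', ← mul_div_mul_left _ _ h4.ne', ← hA1e, ← hB1e,
    hA0, hB0, ev_initS, ev_initS]

/-- swapping the two variables -/
noncomputable def swp : MvPolynomial (Fin 2) ℝ ≃ₐ[ℝ] MvPolynomial (Fin 2) ℝ :=
  MvPolynomial.renameEquiv ℝ (Equiv.swap 0 1)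

lemma pev_swp (p : MvPolynomial (Fin 2) ℝ) (x y : ℝ) : pev (swp p) (x, y) = pev p (y, x) := by
  simp only [pev, swp, MvPolynomial.renameEquiv_apply, MvPolynomial.eval_rename]
  congr 2
  ext i
  fin_cases i <;> simp

lemma main_y (p q : MvPolynomial (Fin 2) ℝ) (hq : q ≠ 0)
    (hcop : ∀ d : MvPolynomial (Fin 2) ℝ, d ∣ p → d ∣ q → IsUnit d) (x₀ y₀ : ℝ)
    (hb : BoundedNear p q (x₀, y₀)) (d σ : ℝ) (hσ : σ * σ = 1) (l : Ultrafilter ℕ)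
    (v : ℕ → ℝ × ℝ) (hv : Tendsto v l (𝓝 (x₀, y₀)))
    (hpos : ∀ᶠ n in (l : Filter ℕ), 0 < σ * ((v n).2 - y₀) ∧ |(v n).1 - x₀| ≤ σ * ((v n).2 - y₀))
    (hlim : Tendsto (fun n => pev p (v n) / pev q (v n)) l (𝓝 d)) :
    ∃ Φ : ℝ → ℝ, TypeI Φ ∧ (∀ t, Φ |t| = Φ t) ∧
      Tendsto (fun t => pev p (x₀ + Φ t, y₀ + σ * t) / pev q (x₀ + Φ t, y₀ + σ * t))
        (𝓝[>] 0) (𝓝 d) := by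
  have hsw : Tendsto Prod.swap (𝓝 (y₀, x₀)) (𝓝 (x₀, y₀)) :=
    continuous_swap.tendsto (y₀, x₀)
  have hsw' : Tendsto Prod.swap (𝓝 (x₀, y₀)) (𝓝 (y₀, x₀)) :=
    continuous_swap.tendsto (x₀, y₀)
  obtain ⟨Φ, h1, h2, h3⟩ := main_x (swp p) (swp q) (by simpa using hq) (by
    intro e he1 he2
    have := hcop (swp.symm e) (by simpa using map_dvd swp.symm he1)
      (by simpa using map_dvd swp.symm he2)
    simpa using this) y₀ x₀ (by
      obtain ⟨U, hU, M, hM⟩ := hb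
      refine ⟨_, hsw hU, M, ?_⟩
      rintro ⟨a, b⟩ hw hne
      rw [pev_swp] at hne
      rw [pev_swp, pev_swp]
      exact hM _ hw hne) d σ hσ l (fun n => (v n).swap) (hsw'.comp hv) hpos (by
      refine hlim.congr fun n => ?_
      simp only [Prod.swap, pev_swp])
  refine ⟨Φ, h1, h2, ?_⟩
  simpa only [pev_swp] using h3

lemma right_shift {f : ℝ → ℝ} {a d : ℝ} (h : Tendsto f (𝓝[>] 0) (𝓝 d)) :
    Tendsto (fun x => f (x - a)) (𝓝[>] a) (𝓝 d) := by
  refine h.comp (tendsto_nhdsWithin_iff.2 ⟨?_, ?_⟩)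
  · refine Tendsto.mono_left ?_ nhdsWithin_le_nhds
    have : Tendsto (fun x : ℝ => x - a) (𝓝 a) (𝓝 (a - a)) := tendsto_id.sub_const a
    rwa [sub_self] at this
  · filter_upwards [eventually_mem_nhdsWithin] with x hx
    exact sub_pos.2 (show a < x from hx)

lemma left_shift {f : ℝ → ℝ} {a d : ℝ} (h : Tendsto f (𝓝[>] 0) (𝓝 d)) :
    Tendsto (fun x => f (a - x)) (𝓝[<] a) (𝓝 d) := by
  refine h.comp (tendsto_nhdsWithin_iff.2 ⟨?_, ?_⟩)
  · refine Tendsto.mono_left ?_ nhdsWithin_le_nhds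
    have : Tendsto (fun x : ℝ => a - x) (𝓝 a) (𝓝 (a - a)) := tendsto_id.const_sub a
    rwa [sub_self] at this
  · filter_upwards [eventually_mem_nhdsWithin] with x hx
    exact sub_pos.2 (show x < a from hx)

lemma four_cases (a b : ℝ) (h : ¬ (a = 0 ∧ b = 0)) :
    ((0 < 1 * a ∧ |b| ≤ 1 * a) ∨ (0 < -1 * a ∧ |b| ≤ -1 * a)) ∨
    ((0 < 1 * b ∧ |a| ≤ 1 * b) ∨ (0 < -1 * b ∧ |a| ≤ -1 * b)) := by
  rcases abs_cases a with ⟨h1, h2⟩ | ⟨h1, h2⟩ <;> rcases abs_cases b with ⟨h3, h4⟩ | ⟨h3, h4⟩ <;>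
    rw [h1, h3] <;> grind

/-- Every limiting value of a bounded rational function at `(x₀,y₀)` is attained as a
one-sided limit along some type (i) curve (in one of the four one-sided directions). -/
theorem limval_attained_on_typeI_curve (p q : MvPolynomial (Fin 2) ℝ) (hq : q ≠ 0)
    (hcop : ∀ d : MvPolynomial (Fin 2) ℝ, d ∣ p → d ∣ q → IsUnit d) (x₀ y₀ : ℝ)
    (hb : BoundedNear p q (x₀, y₀)) (d : ℝ) (hd : d ∈ LimVals p q (x₀, y₀)) :
    ∃ Φ : ℝ → ℝ, TypeI Φ ∧
      (Tendsto (fun x => pev p (x, y₀ + Φ (x - x₀)) / pev q (x, y₀ + Φ (x - x₀)))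
          (𝓝[>] x₀) (𝓝 d) ∨
       Tendsto (fun x => pev p (x, y₀ + Φ (x - x₀)) / pev q (x, y₀ + Φ (x - x₀)))
          (𝓝[<] x₀) (𝓝 d) ∨
       Tendsto (fun y => pev p (x₀ + Φ (y - y₀), y) / pev q (x₀ + Φ (y - y₀), y))
          (𝓝[>] y₀) (𝓝 d) ∨
       Tendsto (fun y => pev p (x₀ + Φ (y - y₀), y) / pev q (x₀ + Φ (y - y₀), y))
          (𝓝[<] y₀) (𝓝 d)) := by
  obtain ⟨v, hv, hne, hqne, hlim⟩ := hd
  set l : Ultrafilter ℕ := hyperfilter ℕ with hl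
  have hle : (l : Filter ℕ) ≤ atTop := by
    rw [hl, ← Nat.cofinite_eq_atTop]; exact hyperfilter_le_cofinite
  have hv' := hv.mono_left hle
  have hlim' := hlim.mono_left hle
  have hcases := Filter.Eventually.of_forall (f := (l : Filter ℕ)) fun n =>
    four_cases ((v n).1 - x₀) ((v n).2 - y₀) (by
      rintro ⟨h1, h2⟩
      exact hne n (Prod.ext (sub_eq_zero.1 h1) (sub_eq_zero.1 h2)))
  rw [Ultrafilter.eventually_or, Ultrafilter.eventually_or, Ultrafilter.eventually_or] at hcases
  have habs : ∀ {Φ : ℝ → ℝ} (_ : ∀ t, Φ |t| = Φ t) (a x : ℝ), Φ (a - x) = Φ (x - a) := by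
    intro Φ h a x
    rw [← h (a - x), abs_sub_comm, h]
  rcases hcases with (h | h) | (h | h)
  · obtain ⟨Φ, h1, h2, h3⟩ := main_x p q hq hcop x₀ y₀ hb d 1 (by norm_num) l v hv' h hlim'
    refine ⟨Φ, h1, Or.inl ?_⟩
    have h4 := right_shift (a := x₀) h3
    simpa using h4
  · obtain ⟨Φ, h1, h2, h3⟩ := main_x p q hq hcop x₀ y₀ hb d (-1) (by norm_num) l v hv' h hlim'
    refine ⟨Φ, h1, Or.inr (Or.inl ?_)⟩
    have h4 := left_shift (a := x₀) h3
    simpa [habs h2] using h4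
  · obtain ⟨Φ, h1, h2, h3⟩ := main_y p q hq hcop x₀ y₀ hb d 1 (by norm_num) l v hv' h hlim'
    refine ⟨Φ, h1, Or.inr (Or.inr (Or.inl ?_))⟩
    have h4 := right_shift (a := y₀) h3
    simpa using h4
  · obtain ⟨Φ, h1, h2, h3⟩ := main_y p q hq hcop x₀ y₀ hb d (-1) (by norm_num) l v hv' h hlim'
    refine ⟨Φ, h1, Or.inr (Or.inr (Or.inr ?_))⟩
    have h4 := left_shift (a := y₀) h3
    simpa [habs h2] using h4
end

section
/- Let f = p/q be a rational function of two real variables, let (x₀,y₀) ∈ ℝ² and let a ∈ ℝ. Then f(v) → a as v → (x₀,y₀) through points v ≠ (x₀,y₀) with q(v) ≠ 0, if and only if for every function Φ of type (i) one has lim_{x→x₀} f(x, y₀+Φ(x−x₀)) = a and lim_{y→y₀} f(x₀+Φ(y−y₀), y) = a, where each limit is taken through points where q is nonzero. -/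
open MvPolynomial Filter Topology

section Core
open Asymptotics

variable {ι : Type*}

theorem aux_tri (l : Ultrafilter ι) (f g : ι → ℝ) :
    f =o[(l : Filter ι)] g ∨ g =o[(l : Filter ι)] f ∨ f =Θ[(l : Filter ι)] g := by
  have key : ∀ f g : ι → ℝ, ¬ f =O[(l : Filter ι)] g → g =o[(l : Filter ι)] f := by
    intro f g h
    rw [isLittleO_iff]
    intro c hc
    have h2 : ¬ ∀ᶠ i in (l : Filter ι), ‖f i‖ ≤ c⁻¹ * ‖g i‖ := fun h' => h (IsBigO.of_bound _ h')
    rw [← Ultrafilter.eventually_not] at h2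
    filter_upwards [h2] with i hi
    push Not at hi
    have := mul_le_mul_of_nonneg_left hi.le hc.le
    rwa [← mul_assoc, mul_inv_cancel₀ hc.ne', one_mul] at this
  by_cases h1 : f =O[(l : Filter ι)] g
  · by_cases h2 : g =O[(l : Filter ι)] f
    · exact Or.inr (Or.inr ⟨h1, h2⟩)
    · exact Or.inl (key _ _ h2)
  · exact Or.inr (Or.inl (key _ _ h1))

theorem aux_lim (l : Ultrafilter ι) (f g : ι → ℝ) (hg : ∀ᶠ i in (l : Filter ι), g i ≠ 0)
    (h : f =Θ[(l : Filter ι)] g) : ∃ c : ℝ, (fun i => f i - c * g i) =o[(l : Filter ι)] g := by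
  obtain ⟨C, hC⟩ := h.1.bound
  have h1 : ∀ᶠ i in (l : Filter ι), f i / g i ∈ Set.Icc (-C) C := by
    filter_upwards [hC, hg] with i hi hgi
    rw [Set.mem_Icc, ← abs_le, abs_div, div_le_iff₀ (abs_pos.2 hgi)]
    exact hi
  obtain ⟨c, -, hc⟩ := (isCompact_Icc (a := -C) (b := C)).ultrafilter_le_nhds
    (l.map fun i => f i / g i) (by rw [le_principal_iff]; exact h1)
  have hc' : Tendsto (fun i => f i / g i) (l : Filter ι) (𝓝 c) := hc
  refine ⟨c, ?_⟩
  rw [isLittleO_iff_tendsto' (by filter_upwards [hg] with i hi h0; exact absurd h0 hi)]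
  have := hc'.sub_const c
  rw [sub_self] at this
  refine this.congr' ?_
  filter_upwards [hg] with i hi
  field_simp

variable {l : Filter ι} {x : ι → ℝ}

theorem aux_pos (hx : Tendsto x l (𝓝[>] 0)) : ∀ᶠ i in l, 0 < x i :=
  hx.eventually self_mem_nhdsWithin

theorem aux_rpow_o (hx : Tendsto x l (𝓝[>] 0)) {a b : ℝ} (h : a < b) :
    (fun i => x i ^ b) =o[l] fun i => x i ^ a := by
  have hp := aux_pos hx
  rw [isLittleO_iff_tendsto' (by
    filter_upwards [hp] with i hi h0; exact absurd h0 (Real.rpow_pos_of_pos hi _).ne')]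
  have h0 : Tendsto (fun i => x i ^ (b - a)) l (𝓝 0) := by
    have : Tendsto (fun y : ℝ => y ^ (b - a)) (𝓝 0) (𝓝 0) := by
      have := (Real.continuousAt_rpow_const 0 (b - a) (Or.inr (sub_pos.2 h).le)).tendsto
      rwa [Real.zero_rpow (sub_pos.2 h).ne'] at this
    exact this.comp (hx.mono_right nhdsWithin_le_nhds)
  refine h0.congr' ?_
  filter_upwards [hp] with i hi
  rw [Real.rpow_sub hi]

theorem aux_rpow_O (hx : Tendsto x l (𝓝[>] 0)) {a b : ℝ} (h : a ≤ b) :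
    (fun i => x i ^ b) =O[l] fun i => x i ^ a := by
  rcases h.eq_or_lt with rfl | h
  · exact isBigO_refl _ _
  · exact (aux_rpow_o hx h).isBigO

theorem aux_O_irrefl [l.NeBot] (hx : Tendsto x l (𝓝[>] 0)) {a b : ℝ}
    (h : (fun i => x i ^ a) =O[l] fun i => x i ^ b) : b ≤ a := by
  by_contra hab
  push Not at hab
  have := (h.trans_isLittleO (aux_rpow_o hx hab))
  have h2 := (isLittleO_irrefl (f'' := fun i => x i ^ a) (l := l)) (by
    refine Eventually.frequently ?_
    filter_upwards [aux_pos hx] with i hi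
    exact (Real.rpow_pos_of_pos hi _).ne')
  exact h2 this

theorem aux_Theta_unique [l.NeBot] (hx : Tendsto x l (𝓝[>] 0)) {a b : ℝ}
    (h : (fun i => x i ^ a) =Θ[l] fun i => x i ^ b) : a = b :=
  le_antisymm (aux_O_irrefl hx h.2) (aux_O_irrefl hx h.1)

theorem aux_root (hx : Tendsto x l (𝓝[>] 0)) {D : ℕ} (hD : 0 < D) :
    Tendsto (fun i => x i ^ (1 / (D : ℝ))) l (𝓝[>] 0) := by
  refine tendsto_nhdsWithin_iff.2 ⟨?_, ?_⟩
  · have h := (aux_rpow_o hx (a := 0) (b := 1 / (D : ℝ)) (by positivity))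
    simpa using h
  · filter_upwards [aux_pos hx] with i hi
    exact Real.rpow_pos_of_pos hi _

theorem aux_root_pow {x : ℝ} (hx : 0 ≤ x) (D m : ℕ) :
    (x ^ (1 / (D : ℝ))) ^ m = x ^ ((m : ℝ) / D) := by
  rw [← Real.rpow_natCast, ← Real.rpow_mul hx]
  congr 1
  ring

theorem aux_root_pow_self {x : ℝ} (hx : 0 ≤ x) {D : ℕ} (hD : 0 < D) :
    (x ^ (1 / (D : ℝ))) ^ D = x := by
  rw [aux_root_pow hx, div_self (by positivity), Real.rpow_one]

/-- Nonzero polynomial at 0+ is comparable to a power. -/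
theorem aux_poly_pow {u : ι → ℝ} (hu : Tendsto u l (𝓝[>] 0)) (F : Polynomial ℝ) (hF : F ≠ 0) :
    ∃ m : ℕ, (fun i => F.eval (u i)) =Θ[l] fun i => u i ^ m := by
  obtain ⟨G, hG, hdiv⟩ := Polynomial.exists_eq_pow_rootMultiplicity_mul_and_not_dvd F hF 0
  refine ⟨F.rootMultiplicity 0, ?_⟩
  have hG0 : G.eval 0 ≠ 0 := by
    intro h
    exact hdiv (Polynomial.dvd_iff_isRoot.2 h)
  have h1 : (fun i => F.eval (u i)) = fun i => u i ^ (F.rootMultiplicity 0) * G.eval (u i) := by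
    funext i
    conv_lhs => rw [hG]
    simp
  have h2 : Tendsto (fun i => G.eval (u i)) l (𝓝 (G.eval 0)) :=
    (G.continuous.tendsto 0).comp (hu.mono_right nhdsWithin_le_nhds)
  rw [h1]
  refine (isTheta_of_div_tendsto_nhds_ne_zero (c := G.eval 0) ?_ hG0).symm
  refine h2.congr' ?_
  filter_upwards [aux_pos hu] with i hi
  field_simp

theorem aux_poly_rpow (hx : Tendsto x l (𝓝[>] 0)) {D : ℕ} (hD : 0 < D) (F : Polynomial ℝ)
    (hF : F ≠ 0) :
    ∃ m : ℕ, (fun i => F.eval (x i ^ (1 / (D : ℝ)))) =Θ[l] fun i => x i ^ ((m : ℝ) / D) := by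
  obtain ⟨m, hm⟩ := aux_poly_pow (aux_root hx hD) F hF
  refine ⟨m, hm.trans_eventuallyEq ?_⟩
  filter_upwards [aux_pos hx] with i hi
  exact aux_root_pow hi.le _ _
end Core


section Core2
open Asymptotics

variable {ι : Type*}

theorem aux_subst (D : ℕ) (F : Polynomial ℝ) (Q : Polynomial (Polynomial ℝ)) (u : ℝ) :
    (Q.eval₂ ((Polynomial.expand ℝ D : Polynomial ℝ →ₐ[ℝ] Polynomial ℝ) : Polynomial ℝ →+* Polynomial ℝ) F).eval u
      = Q.evalEval (u ^ D) (F.eval u) := by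
  rw [← Polynomial.eval₂_evalRingHom, ← Polynomial.coe_evalRingHom, Polynomial.hom_eval₂]
  congr 1
  ext <;> simp

theorem aux_shift (D : ℕ) (hD : 0 < D) (F : Polynomial ℝ) (H : Polynomial (Polynomial ℝ)) (hH : H ≠ 0) :
    ∃ G : Polynomial (Polynomial ℝ), G ≠ 0 ∧
      ∀ u z : ℝ, G.evalEval u z = H.evalEval (u ^ D) (F.eval u + z) := by
  refine ⟨Polynomial.taylor F (H.map ((Polynomial.expand ℝ D : Polynomial ℝ →ₐ[ℝ] Polynomial ℝ) : Polynomial ℝ →+* Polynomial ℝ)), ?_, ?_⟩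
  · intro h
    apply hH
    apply Polynomial.map_injective _ (Polynomial.expand_injective hD)
    apply Polynomial.taylor_injective F
    rw [Polynomial.map_zero, map_zero]
    exact h
  · intro u z
    unfold Polynomial.evalEval
    rw [Polynomial.taylor_eval, Polynomial.eval_map, aux_subst]
    simp [Polynomial.evalEval, add_comm]

theorem aux_dom (l : Ultrafilter ι) (u z : ι → ℝ) (hu : Tendsto u l (𝓝[>] 0))
    (hz : ∀ a m b : ℕ, ¬ (fun i => u i ^ m) =Θ[(l : Filter ι)] fun i => u i ^ a * z i ^ (b + 1))
    (G : Polynomial (Polynomial ℝ)) :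
    G ≠ 0 → ∃ a b : ℕ, (G.coeff 0 = 0 → 0 < b) ∧
      (fun i => G.evalEval (u i) (z i)) =Θ[(l : Filter ι)] fun i => u i ^ a * z i ^ b := by
  refine Polynomial.recOnHorner (M := fun G => G ≠ 0 → ∃ a b : ℕ, (G.coeff 0 = 0 → 0 < b) ∧
      (fun i => G.evalEval (u i) (z i)) =Θ[(l : Filter ι)] fun i => u i ^ a * z i ^ b) G ?_ ?_ ?_
  · intro h; exact absurd rfl h
  · intro G1 h0 hc0 hh ih _
    obtain ⟨m, hm⟩ := aux_poly_pow hu h0 hh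
    have hcoe : (G1 + Polynomial.C h0).coeff 0 = h0 := by simp [hc0]
    have hval : (fun i => (G1 + Polynomial.C h0).evalEval (u i) (z i)) =
        (fun i => G1.evalEval (u i) (z i)) + fun i => h0.eval (u i) := by
      funext i
      rw [Pi.add_apply, Polynomial.evalEval_add, Polynomial.evalEval_C]
    rw [hval, hcoe]
    by_cases hG : G1 = 0
    · refine ⟨m, 0, fun h => absurd h hh, ?_⟩
      simpa [hG, Pi.add_def] using hm
    obtain ⟨a, b, hb, hab⟩ := ih hG
    obtain ⟨b, rfl⟩ := Nat.exists_eq_succ_of_ne_zero (hb hc0).ne'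
    rcases aux_tri l (fun i => u i ^ m) (fun i => u i ^ a * z i ^ (b + 1)) with h | h | h
    · exact ⟨a, b + 1, fun h => absurd h hh, hab.add_isLittleO (hm.trans_isLittleO h)⟩
    · refine ⟨m, 0, fun h => absurd h hh, ?_⟩
      simp only [pow_zero, mul_one]
      exact (hab.trans_isLittleO h).add_isTheta hm
    · exact absurd h (hz _ _ _)
  · intro G1 h ih _
    obtain ⟨a, b, -, hab⟩ := ih h
    refine ⟨a, b + 1, fun _ => Nat.succ_pos _, ?_⟩
    have := hab.mul (isTheta_refl z (l : Filter ι))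
    simpa [pow_succ, mul_assoc] using this

theorem aux_L1 (l : Ultrafilter ι) (x z : ι → ℝ) (hx : Tendsto x l (𝓝[>] 0)) (D : ℕ) (hD : 0 < D)
    (hz : ∀ᶠ i in (l : Filter ι), z i ≠ 0) (G : Polynomial (Polynomial ℝ)) (hG : G ≠ 0)
    (hGz : ∀ᶠ i in (l : Filter ι), G.evalEval (x i ^ (1 / (D : ℝ))) (z i) = 0) :
    ∃ r : ℚ, z =Θ[(l : Filter ι)] fun i => x i ^ (r : ℝ) := by
  by_contra hcon
  have hu := aux_root hx hD
  have hup := aux_pos hu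
  obtain ⟨a, b, -, hab⟩ := aux_dom l _ z hu (by
    intro a m b h
    apply hcon
    refine ⟨((m : ℚ) - a) / (D * (b + 1)), ?_⟩
    have h1 : (fun i => z i ^ (b + 1)) =Θ[(l : Filter ι)]
        fun i => x i ^ (((m : ℝ) - a) / D) := by
      have h2 := h.symm.div (isTheta_refl (fun i => (x i ^ (1 / (D : ℝ))) ^ a) (l : Filter ι))
      refine (EventuallyEq.isTheta ?_).trans (h2.trans_eventuallyEq ?_)
      · filter_upwards [hup] with i hi
        field_simp
      · filter_upwards [aux_pos hx] with i hi
        rw [aux_root_pow hi.le, aux_root_pow hi.le, ← Real.rpow_sub hi, sub_div]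
    have h3 := IsTheta.rpow (r := 1 / ((b : ℝ) + 1)) (f := fun i => |z i ^ (b + 1)|)
      (g := fun i => x i ^ (((m : ℝ) - a) / D)) (Eventually.of_forall fun i => abs_nonneg _)
      (by filter_upwards [aux_pos hx] with i hi using (Real.rpow_pos_of_pos hi _).le)
      h1.norm_left
    refine (IsTheta.of_norm_eventuallyEq_norm ?_).trans (h3.trans_eventuallyEq ?_)
    · refine Eventually.of_forall fun i => ?_
      simp only [Real.norm_eq_abs]
      rw [abs_pow, ← Real.rpow_natCast, ← Real.rpow_mul (abs_nonneg _)]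
      push_cast
      rw [mul_one_div_cancel (by positivity), Real.rpow_one, abs_abs]
    · filter_upwards [aux_pos hx] with i hi
      rw [← Real.rpow_mul hi.le]
      congr 1
      push_cast
      field_simp) G hG
  obtain ⟨i, h1, h2, h3, h4⟩ := (hab.eq_zero_iff.and (hGz.and (hz.and hup))).exists
  have := h1.1 h2
  exact mul_ne_zero (pow_ne_zero _ h4.ne') (pow_ne_zero _ h3) this

theorem aux_step (l : Ultrafilter ι) (x y : ι → ℝ) (hx : Tendsto x l (𝓝[>] 0))
    (H : Polynomial (Polynomial ℝ)) (hH : H ≠ 0)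
    (hHy : ∀ᶠ i in (l : Filter ι), H.evalEval (x i) (y i) = 0) (D : ℕ) (hD : 0 < D)
    (F : Polynomial ℝ) :
    (∀ᶠ i in (l : Filter ι), y i - F.eval (x i ^ (1 / (D : ℝ))) = 0) ∨
    ∃ (r : ℚ) (c : ℝ), ((fun i => y i - F.eval (x i ^ (1 / (D : ℝ)))) =Θ[(l : Filter ι)]
        fun i => x i ^ (r : ℝ)) ∧
      (fun i => y i - F.eval (x i ^ (1 / (D : ℝ))) - c * x i ^ (r : ℝ)) =o[(l : Filter ι)]
        fun i => x i ^ (r : ℝ) := by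
  by_cases h0 : ∀ᶠ i in (l : Filter ι), y i - F.eval (x i ^ (1 / (D : ℝ))) = 0
  · exact Or.inl h0
  right
  rw [← Ultrafilter.eventually_not] at h0
  obtain ⟨G, hG, hGe⟩ := aux_shift D hD F H hH
  obtain ⟨r, hr⟩ := aux_L1 l x _ hx D hD h0 G hG (by
    filter_upwards [hHy, aux_pos hx] with i hi hxi
    rw [hGe, aux_root_pow_self hxi.le hD]
    simpa using hi)
  obtain ⟨c, hc⟩ := aux_lim l _ _ (by
    filter_upwards [aux_pos hx] with i hi using (Real.rpow_pos_of_pos hi _).ne') hr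
  exact ⟨r, c, hr, hc⟩

end Core2


section Core3
open Asymptotics

variable {ι : Type*}

theorem aux_evalEval_map (x y : ℝ) (Q : Polynomial (Polynomial ℝ)) :
    Q.evalEval x y = (Q.map (Polynomial.evalRingHom x)).eval y := by
  rw [← Polynomial.eval₂_evalRingHom, Polynomial.eval_map]

theorem aux_mvt (Q : Polynomial (Polynomial ℝ)) (x y a b : ℝ) :
    ∃ η : ℝ, |η - y| ≤ |a - y| + |b - y| ∧
      Q.evalEval x b - Q.evalEval x a = Q.derivative.evalEval x η * (b - a) := by
  have key : ∀ a b : ℝ, a < b → ∃ η : ℝ, |η - y| ≤ |a - y| + |b - y| ∧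
      Q.evalEval x b - Q.evalEval x a = Q.derivative.evalEval x η * (b - a) := by
    intro a b hab
    obtain ⟨η, hη, h⟩ := exists_deriv_eq_slope (fun s => (Q.map (Polynomial.evalRingHom x)).eval s)
      hab (Polynomial.continuous _).continuousOn (Polynomial.differentiable _).differentiableOn
    refine ⟨η, ?_, ?_⟩
    · have h1 := hη.1
      have h2 := hη.2
      have h3 := neg_abs_le (a - y)
      have h4 := le_abs_self (b - y)
      have h5 := abs_nonneg (a - y)
      have h6 := abs_nonneg (b - y)
      rw [abs_le]
      constructor <;> linarith
    · rw [Polynomial.deriv, Polynomial.derivative_map] at h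
      rw [aux_evalEval_map, aux_evalEval_map, aux_evalEval_map, h,
        div_mul_cancel₀ _ (sub_pos.2 hab).ne']
  rcases lt_trichotomy a b with h | h | h
  · exact key a b h
  · subst h
    exact ⟨a, by linarith [abs_nonneg (a - y)], by simp⟩
  · obtain ⟨η, h1, h2⟩ := key b a h
    exact ⟨η, by linarith, by linarith⟩

theorem aux_add' (D : ℕ) (_hD : 0 < D) (F : Polynomial ℝ) (hF : Polynomial.X ^ D ∣ F)
    (n : ℕ) (hn : D ≤ n) (c : ℝ) :
    ∃ F' : Polynomial ℝ, Polynomial.X ^ D ∣ F' ∧ ∀ x : ℝ, 0 < x →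
      F'.eval (x ^ (1 / (D : ℝ))) = F.eval (x ^ (1 / (D : ℝ))) + c * x ^ ((n : ℝ) / D) := by
  refine ⟨F + Polynomial.C c * Polynomial.X ^ n,
    dvd_add hF (Dvd.dvd.mul_left (pow_dvd_pow _ hn) _), ?_⟩
  intro x hx
  simp only [Polynomial.eval_add, Polynomial.eval_mul, Polynomial.eval_C, Polynomial.eval_pow,
    Polynomial.eval_X]
  rw [aux_root_pow hx.le]

theorem aux_add (D : ℕ) (hD : 0 < D) (F : Polynomial ℝ) (hF : Polynomial.X ^ D ∣ F)
    (r : ℚ) (hr : 1 ≤ r) (c : ℝ) :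
    ∃ (D' : ℕ) (F' : Polynomial ℝ), 0 < D' ∧ Polynomial.X ^ D' ∣ F' ∧ ∀ x : ℝ, 0 < x →
      F'.eval (x ^ (1 / (D' : ℝ))) = F.eval (x ^ (1 / (D : ℝ))) + c * x ^ (r : ℝ) := by
  have hd : 0 < r.den := r.den_pos
  have hD' : 0 < D * r.den := Nat.mul_pos hD hd
  have hnum : 0 ≤ r.num := Rat.num_nonneg.2 (by linarith)
  have hcast : ((r.num.toNat : ℕ) : ℚ) = r * r.den := by
    rw [Rat.mul_den_eq_num]
    exact_mod_cast Int.toNat_of_nonneg hnum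
  have hle : r.den ≤ r.num.toNat := by
    have : (r.den : ℚ) ≤ (r.num.toNat : ℕ) := by
      rw [hcast]
      have : (0 : ℚ) < r.den := by exact_mod_cast hd
      nlinarith
    exact_mod_cast this
  obtain ⟨F', h1, h2⟩ := aux_add' (D * r.den) hD' (Polynomial.expand ℝ r.den F) (by
    obtain ⟨K, rfl⟩ := hF
    refine ⟨Polynomial.expand ℝ r.den K, ?_⟩
    rw [map_mul, map_pow, Polynomial.expand_X, ← pow_mul, mul_comm D]) (D * r.num.toNat)
    (Nat.mul_le_mul_left _ hle) c
  refine ⟨_, F', hD', h1, fun x hx => ?_⟩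
  have hcast' : ((r.num.toNat : ℕ) : ℝ) = r * r.den := by exact_mod_cast hcast
  have e1 : ((r.den : ℕ) : ℝ) / ((D * r.den : ℕ) : ℝ) = 1 / (D : ℝ) := by
    push_cast
    field_simp
  have e2 : ((D * r.num.toNat : ℕ) : ℝ) / ((D * r.den : ℕ) : ℝ) = r := by
    push_cast
    rw [hcast']
    field_simp
  rw [h2 x hx, Polynomial.expand_eval, aux_root_pow hx.le, e1, e2]

/-- Stability of a polynomial near `y`. -/
def AuxStable (l : Filter ι) (x y : ι → ℝ) (P : Polynomial (Polynomial ℝ)) : Prop :=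
  ∃ (D : ℕ) (F : Polynomial ℝ) (r β : ℝ), 0 < D ∧ Polynomial.X ^ D ∣ F ∧
    ((fun i => F.eval (x i ^ (1 / (D : ℝ))) - y i) =O[l] fun i => x i ^ r) ∧
    ∀ ξ : ι → ℝ, ((fun i => ξ i - y i) =O[l] fun i => x i ^ r) →
      (fun i => P.evalEval (x i) (ξ i)) =Θ[l] fun i => x i ^ β

theorem aux_exact (l : Ultrafilter ι) (x y : ι → ℝ) (hx : Tendsto x l (𝓝[>] 0))
    (hy : y =O[(l : Filter ι)] fun i => x i ^ (1 : ℝ))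
    (H : Polynomial (Polynomial ℝ)) (hH : H ≠ 0)
    (hHy : ∀ᶠ i in (l : Filter ι), H.evalEval (x i) (y i) = 0) (M : ℝ)
    (hno : ∀ (D : ℕ) (F : Polynomial ℝ), 0 < D → Polynomial.X ^ D ∣ F →
      ¬ (fun i => y i - F.eval (x i ^ (1 / (D : ℝ)))) =O[(l : Filter ι)] fun i => x i ^ M)
    (D : ℕ) (F : Polynomial ℝ) (hD : 0 < D) (hF : Polynomial.X ^ D ∣ F) :
    ∃ (r : ℚ) (c : ℝ), 1 ≤ r ∧ (r : ℝ) < M ∧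
      ((fun i => y i - F.eval (x i ^ (1 / (D : ℝ)))) =Θ[(l : Filter ι)]
        fun i => x i ^ (r : ℝ)) ∧
      (fun i => y i - F.eval (x i ^ (1 / (D : ℝ))) - c * x i ^ (r : ℝ)) =o[(l : Filter ι)]
        fun i => x i ^ (r : ℝ) := by
  rcases aux_step l x y hx H hH hHy D hD F with h | ⟨r, c, h1, h2⟩
  · exfalso
    refine hno D F hD hF ?_
    refine (EventuallyEq.isBigO (f₂ := fun _ => (0 : ℝ)) h).trans (isBigO_zero _ _)
  refine ⟨r, c, ?_, ?_, h1, h2⟩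
  · have hΦ : (fun i => F.eval (x i ^ (1 / (D : ℝ)))) =O[(l : Filter ι)] fun i => x i ^ (1 : ℝ) := by
      obtain ⟨K, rfl⟩ := hF
      have hK : (fun i => K.eval (x i ^ (1 / (D : ℝ)))) =O[(l : Filter ι)] fun _ => (1 : ℝ) :=
        ((K.continuous.tendsto 0).comp
          ((aux_root hx hD).mono_right nhdsWithin_le_nhds)).isBigO_one ℝ
      have := (isBigO_refl (fun i => x i ^ (1 : ℝ)) (l : Filter ι)).mul hK
      refine (EventuallyEq.isBigO ?_).trans (this.trans (by simpa using isBigO_refl _ _))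
      filter_upwards [aux_pos hx] with i hi
      rw [Polynomial.eval_mul, Polynomial.eval_pow, Polynomial.eval_X, aux_root_pow_self hi.le hD,
        Real.rpow_one]
    have := aux_O_irrefl hx (h1.2.trans (hy.sub hΦ))
    exact_mod_cast this
  · by_contra hcon
    push Not at hcon
    exact hno D F hD hF (h1.1.trans (aux_rpow_O hx hcon))

theorem aux_stable_step (l : Ultrafilter ι) (x y : ι → ℝ) (hx : Tendsto x l (𝓝[>] 0))
    (hy : y =O[(l : Filter ι)] fun i => x i ^ (1 : ℝ))
    (H : Polynomial (Polynomial ℝ)) (hH : H ≠ 0)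
    (hHy : ∀ᶠ i in (l : Filter ι), H.evalEval (x i) (y i) = 0) (M : ℝ)
    (hno : ∀ (D : ℕ) (F : Polynomial ℝ), 0 < D → Polynomial.X ^ D ∣ F →
      ¬ (fun i => y i - F.eval (x i ^ (1 / (D : ℝ)))) =O[(l : Filter ι)] fun i => x i ^ M)
    (Q : Polynomial (Polynomial ℝ)) (hQ' : AuxStable (l : Filter ι) x y Q.derivative) :
    AuxStable (l : Filter ι) x y Q := by
  by_contra hQ
  obtain ⟨D, F, r₀, β, hD, hF, hFy, hst⟩ := hQ'
  have hexact := aux_exact l x y hx hy H hH hHy M hno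
  have hDr : (0 : ℝ) < D := by exact_mod_cast hD
  -- polynomial values along curves
  have hval : ∀ (P : Polynomial (Polynomial ℝ)) (D : ℕ) (F : Polynomial ℝ), 0 < D →
      (∀ᶠ i in (l : Filter ι), P.evalEval (x i) (F.eval (x i ^ (1 / (D : ℝ)))) = 0) ∨
      ∃ m : ℕ, (fun i => P.evalEval (x i) (F.eval (x i ^ (1 / (D : ℝ))))) =Θ[(l : Filter ι)]
        fun i => x i ^ ((m : ℝ) / D) := by
    intro P D F hD
    set R := P.eval₂ ((Polynomial.expand ℝ D : Polynomial ℝ →ₐ[ℝ] Polynomial ℝ) :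
      Polynomial ℝ →+* Polynomial ℝ) F with hR
    have he : ∀ᶠ i in (l : Filter ι), P.evalEval (x i) (F.eval (x i ^ (1 / (D : ℝ)))) =
        R.eval (x i ^ (1 / (D : ℝ))) := by
      filter_upwards [aux_pos hx] with i hi
      rw [hR, aux_subst, aux_root_pow_self hi.le hD]
    by_cases h0 : R = 0
    · left
      filter_upwards [he] with i hi
      rw [hi, h0, Polynomial.eval_zero]
    · right
      obtain ⟨m, hm⟩ := aux_poly_rpow hx hD R h0
      exact ⟨m, (EventuallyEq.isTheta he).trans hm⟩
  -- mean value estimate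
  have hmv : ∀ (r : ℝ), r₀ ≤ r → ∀ ξ ζ : ι → ℝ,
      ((fun i => ξ i - y i) =O[(l : Filter ι)] fun i => x i ^ r) →
      ((fun i => ζ i - y i) =O[(l : Filter ι)] fun i => x i ^ r) →
      (fun i => Q.evalEval (x i) (ζ i) - Q.evalEval (x i) (ξ i)) =Θ[(l : Filter ι)]
        fun i => x i ^ β * (ζ i - ξ i) := by
    intro r hr ξ ζ hξ hζ
    choose η hη1 hη2 using fun i => aux_mvt Q (x i) (y i) (ξ i) (ζ i)
    have hη : (fun i => η i - y i) =O[(l : Filter ι)] fun i => x i ^ r₀ := by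
      refine (IsBigO.trans ?_ (aux_rpow_O hx hr))
      refine IsBigO.trans ?_ (hξ.norm_left.add hζ.norm_left)
      refine IsBigO.of_bound 1 (Eventually.of_forall fun i => ?_)
      rw [one_mul]
      exact (hη1 i).trans (le_abs_self _)
    have h1 := (hst η hη).mul (isTheta_refl (fun i => ζ i - ξ i) (l : Filter ι))
    refine (EventuallyEq.isTheta (Eventually.of_forall fun i => hη2 i)).trans h1
  -- β is a multiple of 1/D
  obtain ⟨b, hb⟩ : ∃ b : ℕ, β = (b : ℝ) / D := by
    have h1 := hst _ hFy
    rcases hval Q.derivative D F hD with h | ⟨m, hm⟩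
    · exfalso
      obtain ⟨i, hi1, hi2, hi3⟩ := (h1.eq_zero_iff.and (h.and (aux_pos hx))).exists
      exact (Real.rpow_pos_of_pos hi3 β).ne' (hi1.1 hi2)
    · exact ⟨m, aux_Theta_unique hx (h1.symm.trans hm)⟩
  -- nonstability bounds the value
  have hsmall : ∀ (D : ℕ) (F : Polynomial ℝ), 0 < D → Polynomial.X ^ D ∣ F → ∀ r : ℝ, r₀ ≤ r →
      ((fun i => F.eval (x i ^ (1 / (D : ℝ))) - y i) =O[(l : Filter ι)] fun i => x i ^ r) →
      (fun i => Q.evalEval (x i) (F.eval (x i ^ (1 / (D : ℝ))))) =O[(l : Filter ι)]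
        fun i => x i ^ (β + r) := by
    intro D F hD hF r hr hFr
    rcases hval Q D F hD with h | ⟨m, hm⟩
    · exact (EventuallyEq.isBigO (f₂ := fun _ => (0 : ℝ)) h).trans (isBigO_zero _ _)
    by_cases hlt : (m : ℝ) / D < β + r
    · exfalso
      refine hQ ⟨D, F, r, (m : ℝ) / D, hD, hF, hFr, fun ξ hξ => ?_⟩
      have h1 := hmv r hr _ ξ hFr hξ
      have h2 : (fun i => x i ^ β * (ξ i - F.eval (x i ^ (1 / (D : ℝ))))) =O[(l : Filter ι)]
          fun i => x i ^ (β + r) := by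
        have h3 : (fun i => ξ i - F.eval (x i ^ (1 / (D : ℝ)))) =O[(l : Filter ι)]
            fun i => x i ^ r := by
          simpa using hξ.sub hFr
        refine ((isBigO_refl (fun i => x i ^ β) (l : Filter ι)).mul h3).trans
          (EventuallyEq.isBigO ?_)
        filter_upwards [aux_pos hx] with i hi
        rw [Real.rpow_add hi]
      have h4 := ((h1.1.trans h2).trans_isLittleO (aux_rpow_o hx hlt))
      have h5 := hm.add_isLittleO h4
      refine (EventuallyEq.isTheta (Eventually.of_forall fun i => ?_)).trans h5
      simp
    · push Not at hlt
      exact hm.1.trans (aux_rpow_O hx hlt)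
  -- exact exponents of curves with denominator D lie in (1/D)ℤ
  have hden : ∀ F : Polynomial ℝ, Polynomial.X ^ D ∣ F → ∀ r : ℚ, ∀ c : ℝ, r₀ ≤ r → 1 ≤ r →
      ((fun i => y i - F.eval (x i ^ (1 / (D : ℝ)))) =Θ[(l : Filter ι)]
        fun i => x i ^ (r : ℝ)) →
      ((fun i => y i - F.eval (x i ^ (1 / (D : ℝ))) - c * x i ^ (r : ℝ)) =o[(l : Filter ι)]
        fun i => x i ^ (r : ℝ)) → ∃ n : ℕ, D ≤ n ∧ (r : ℝ) = (n : ℝ) / D := by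
    intro F hF r c hr₀ hr1 hΘ ho
    obtain ⟨D', F', hD', hF', hv⟩ := aux_add D hD F hF r hr1 c
    obtain ⟨r', c', -, -, hΘ', -⟩ := hexact D' F' hD' hF'
    have hyF' : (fun i => y i - F'.eval (x i ^ (1 / (D' : ℝ)))) =o[(l : Filter ι)]
        fun i => x i ^ (r : ℝ) := by
      refine (EventuallyEq.trans_isLittleO ?_ ho)
      filter_upwards [aux_pos hx] with i hi
      rw [hv _ hi]
      ring
    have hrr : (r : ℝ) < r' := by
      by_contra hcon
      push Not at hcon
      have h1 := (aux_rpow_O hx hcon).trans hΘ'.2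
      have h2 := h1.trans_isLittleO hyF'
      obtain ⟨i, hi⟩ := (aux_pos hx).exists
      refine (isLittleO_irrefl (f'' := fun i => x i ^ (r : ℝ)) (l := (l : Filter ι)))
        (Eventually.frequently ?_) h2
      filter_upwards [aux_pos hx] with i hi using (Real.rpow_pos_of_pos hi _).ne'
    have hF'neg : (fun i => F'.eval (x i ^ (1 / (D' : ℝ))) - y i) =O[(l : Filter ι)]
        fun i => x i ^ (r' : ℝ) := by
      simpa using hΘ'.1.neg_left
    have hFneg : (fun i => F.eval (x i ^ (1 / (D : ℝ))) - y i) =O[(l : Filter ι)]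
        fun i => x i ^ (r : ℝ) := by
      simpa using hΘ.1.neg_left
    have h1 := hsmall D' F' hD' hF' r' (hr₀.trans hrr.le) hF'neg
    have h2 := hmv r hr₀ _ _ (hF'neg.trans (aux_rpow_O hx hrr.le)) hFneg
    have h3 : (fun i => F.eval (x i ^ (1 / (D : ℝ))) - F'.eval (x i ^ (1 / (D' : ℝ))))
        =Θ[(l : Filter ι)] fun i => x i ^ (r : ℝ) := by
      have := (IsTheta.add_isLittleO (f₁ := fun i => -(y i - F.eval (x i ^ (1 / (D : ℝ))))) ⟨hΘ.1.neg_left, hΘ.2.neg_right⟩) hyF'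
      refine (EventuallyEq.isTheta (Eventually.of_forall fun i => ?_)).trans this
      simp
    have h4 : (fun i => x i ^ β * (F.eval (x i ^ (1 / (D : ℝ))) - F'.eval (x i ^ (1 / (D' : ℝ)))))
        =Θ[(l : Filter ι)] fun i => x i ^ (β + r) := by
      refine ((isTheta_refl (fun i => x i ^ β) (l : Filter ι)).mul h3).trans_eventuallyEq ?_
      filter_upwards [aux_pos hx] with i hi
      rw [Real.rpow_add hi]
    have h5 := (h2.trans h4).add_isLittleO (h1.trans_isLittleO
      (aux_rpow_o hx (add_lt_add_right hrr β)))
    have h6 : (fun i => Q.evalEval (x i) (F.eval (x i ^ (1 / (D : ℝ))))) =Θ[(l : Filter ι)]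
        fun i => x i ^ (β + r) := by
      refine (EventuallyEq.isTheta (Eventually.of_forall fun i => ?_)).trans h5
      simp
    rcases hval Q D F hD with h | ⟨m, hm⟩
    · exfalso
      obtain ⟨i, hi1, hi2, hi3⟩ := (h6.eq_zero_iff.and (h.and (aux_pos hx))).exists
      exact (Real.rpow_pos_of_pos hi3 _).ne' (hi1.1 hi2)
    · have h7 := aux_Theta_unique hx (h6.symm.trans hm)
      have h8 : (r : ℝ) * D = m - b := by
        rw [hb] at h7
        field_simp at h7
        linarith
      have hr1' : (1 : ℝ) ≤ r := by exact_mod_cast hr1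
      have h9 : b + D ≤ m := by
        have : (b : ℝ) + D ≤ m := by nlinarith
        exact_mod_cast this
      refine ⟨m - b, by omega, ?_⟩
      rw [Nat.cast_sub (by omega), ← h8]
      field_simp
  -- iteration
  have hiter : ∀ k : ℕ, ∃ F : Polynomial ℝ, Polynomial.X ^ D ∣ F ∧ ∃ n : ℕ, k ≤ n ∧
      r₀ ≤ (n : ℝ) / D ∧ ((fun i => y i - F.eval (x i ^ (1 / (D : ℝ)))) =Θ[(l : Filter ι)]
        fun i => x i ^ ((n : ℝ) / D)) := by
    have hbase : ∀ (F : Polynomial ℝ), Polynomial.X ^ D ∣ F → ∀ r : ℝ, r₀ ≤ r →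
      ((fun i => y i - F.eval (x i ^ (1 / (D : ℝ)))) =O[(l : Filter ι)]
        fun i => x i ^ r) → ∃ n : ℕ, ∃ c : ℝ, D ≤ n ∧ r ≤ (n : ℝ) / D ∧
        ((fun i => y i - F.eval (x i ^ (1 / (D : ℝ)))) =Θ[(l : Filter ι)]
          fun i => x i ^ ((n : ℝ) / D)) ∧
        ((fun i => y i - F.eval (x i ^ (1 / (D : ℝ))) - c * x i ^ ((n : ℝ) / D))
          =o[(l : Filter ι)] fun i => x i ^ ((n : ℝ) / D)) := by
      intro F hF r hr hO
      obtain ⟨r', c, h1, h2, h3, h4⟩ := hexact D F hD hF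
      have h5 := aux_O_irrefl hx (h3.2.trans hO)
      obtain ⟨n, hn, hn'⟩ := hden F hF r' c (hr.trans h5) h1 h3 h4
      rw [hn'] at h3 h4 h5
      exact ⟨n, c, hn, h5, h3, h4⟩
    intro k
    induction k with
    | zero =>
      obtain ⟨n, c, h1, h2, h3, h4⟩ := hbase F hF r₀ le_rfl (by simpa using hFy.neg_left)
      exact ⟨F, hF, n, Nat.zero_le _, h2, h3⟩
    | succ k ih =>
      obtain ⟨F, hF, n, hkn, hrn, hΘ⟩ := ih
      obtain ⟨n', c, h1, h2, h3, h4⟩ := hbase F hF _ hrn hΘ.1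
      obtain ⟨F', hF', hv⟩ := aux_add' D hD F hF n' h1 c
      have h5 : (fun i => y i - F'.eval (x i ^ (1 / (D : ℝ)))) =o[(l : Filter ι)]
          fun i => x i ^ ((n' : ℝ) / D) := by
        refine (EventuallyEq.trans_isLittleO ?_ h4)
        filter_upwards [aux_pos hx] with i hi
        rw [hv _ hi]
        ring
      obtain ⟨n'', c'', h1', h2', h3', -⟩ := hbase F' hF' _ (hrn.trans h2) h5.isBigO
      refine ⟨F', hF', n'', ?_, (hrn.trans h2).trans h2', h3'⟩
      have h6 : n ≤ n' := by
        rw [div_le_div_iff_of_pos_right hDr] at h2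
        exact_mod_cast h2
      have h7 : n' ≤ n'' := by
        rw [div_le_div_iff_of_pos_right hDr] at h2'
        exact_mod_cast h2'
      have h8 : n' ≠ n'' := by
        rintro rfl
        refine (isLittleO_irrefl (f'' := fun i => x i ^ ((n' : ℝ) / D)) (l := (l : Filter ι)))
          (Eventually.frequently ?_) (h3'.2.trans_isLittleO h5)
        filter_upwards [aux_pos hx] with i hi using (Real.rpow_pos_of_pos hi _).ne'
      omega
  obtain ⟨k, hk⟩ := exists_nat_ge (M * D)
  obtain ⟨F, hF, n, hkn, -, hΘ⟩ := hiter k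
  refine hno D F hD hF (hΘ.1.trans (aux_rpow_O hx ?_))
  rw [le_div_iff₀ hDr]
  exact hk.trans (by exact_mod_cast hkn)

theorem aux_puiseux (l : Ultrafilter ι) (x y : ι → ℝ) (hx : Tendsto x l (𝓝[>] 0))
    (hy : y =O[(l : Filter ι)] fun i => x i ^ (1 : ℝ))
    (H : Polynomial (Polynomial ℝ)) (hH : H ≠ 0)
    (hHy : ∀ᶠ i in (l : Filter ι), H.evalEval (x i) (y i) = 0) (M : ℝ) :
    ∃ (D : ℕ) (F : Polynomial ℝ), 0 < D ∧ Polynomial.X ^ D ∣ F ∧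
      (fun i => y i - F.eval (x i ^ (1 / (D : ℝ)))) =O[(l : Filter ι)] fun i => x i ^ M := by
  by_contra hcon
  have hno : ∀ (D : ℕ) (F : Polynomial ℝ), 0 < D → Polynomial.X ^ D ∣ F →
      ¬ (fun i => y i - F.eval (x i ^ (1 / (D : ℝ)))) =O[(l : Filter ι)] fun i => x i ^ M :=
    fun D F hD hF h => hcon ⟨D, F, hD, hF, h⟩
  have hall : ∀ (n : ℕ) (P : Polynomial (Polynomial ℝ)), P.natDegree = n → P ≠ 0 →
      AuxStable (l : Filter ι) x y P := by
    intro n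
    induction n with
    | zero =>
      intro P hP hP0
      rw [Polynomial.natDegree_eq_zero] at hP
      obtain ⟨h, rfl⟩ := hP
      have hh : h ≠ 0 := by
        rintro rfl
        simp at hP0
      obtain ⟨m, hm⟩ := aux_poly_pow hx h hh
      refine ⟨1, 0, 1, m, one_pos, dvd_zero _, ?_, fun ξ _ => ?_⟩
      · simpa using hy
      · simpa [Polynomial.evalEval_C] using hm
    | succ n ih =>
      intro P hP hP0
      refine aux_stable_step l x y hx hy H hH hHy M hno P (ih _ ?_ ?_)
      · rw [Polynomial.natDegree_derivative, hP]
        rfl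
      · intro h
        have := Polynomial.derivative_eq_zero.1 h
        omega
  obtain ⟨D, F, r, β, -, -, -, h⟩ := hall _ H rfl hH
  have h1 := h y (by simpa using isBigO_zero _ _)
  obtain ⟨i, hi1, hi2, hi3⟩ := (h1.eq_zero_iff.and (hHy.and (aux_pos hx))).exists
  exact (Real.rpow_pos_of_pos hi3 _).ne' (hi1.1 hi2)

end Core3


section Core4
open Asymptotics

theorem aux_bezout (g q : Polynomial (Polynomial ℝ)) (hq : q ≠ 0)
    (h : ∀ d, d ∣ g → d ∣ q → IsUnit d) :
    ∃ (A B : Polynomial (Polynomial ℝ)) (r : Polynomial ℝ), r ≠ 0 ∧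
      A * g + B * q = Polynomial.C r := by
  classical
  let K := FractionRing (Polynomial ℝ)
  let φ := algebraMap (Polynomial ℝ) K
  have hinj : Function.Injective φ := IsFractionRing.injective _ _
  let _ : NormalizedGCDMonoid (Polynomial ℝ) := Nonempty.some inferInstance
  have hcop : IsCoprime (g.map φ) (q.map φ) := by
    rw [← isRelPrime_iff_isCoprime]
    intro d hd1 hd2
    have hd0 : d ≠ 0 := by
      rintro rfl
      rw [zero_dvd_iff, Polynomial.map_eq_zero_iff hinj] at hd2
      exact hq hd2
    apply Polynomial.isUnit_or_eq_zero_of_isUnit_integerNormalization_primPart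
      (R := Polynomial ℝ) hd0
    set e := IsLocalization.integerNormalization (nonZeroDivisors (Polynomial ℝ)) d with he
    obtain ⟨c, hc0, hc⟩ := IsLocalization.integerNormalization_spec
      (nonZeroDivisors (Polynomial ℝ)) d
    have hc0' : φ c ≠ 0 := by
      rw [Ne, map_eq_zero_iff φ hinj]
      exact nonZeroDivisors.ne_zero hc0
    have hed : e.primPart.map φ ∣ d := by
      have h1 : e.primPart.map φ ∣ e.map φ := Polynomial.map_dvd φ e.primPart_dvd
      have h2 : e.map φ = Polynomial.C (φ c) * d := by
        rw [← he] at hc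
        rw [← Polynomial.smul_eq_C_mul]
        rw [hc, algebraMap_smul]
      rw [h2] at h1
      exact (IsUnit.dvd_mul_left (Polynomial.isUnit_C.2 (isUnit_iff_ne_zero.2 hc0'))).1 h1
    have hp := e.isPrimitive_primPart
    exact h _ (hp.dvd_of_fraction_map_dvd_fraction_map (K := K) (hed.trans hd1))
      (hp.dvd_of_fraction_map_dvd_fraction_map (K := K) (hed.trans hd2))
  obtain ⟨A, B, hAB⟩ := hcop
  obtain ⟨c, hc0, hc⟩ := IsLocalization.integerNormalization_spec (nonZeroDivisors (Polynomial ℝ)) A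
  obtain ⟨d, hd0, hd⟩ := IsLocalization.integerNormalization_spec (nonZeroDivisors (Polynomial ℝ)) B
  refine ⟨Polynomial.C d * IsLocalization.integerNormalization (nonZeroDivisors (Polynomial ℝ)) A,
    Polynomial.C c * IsLocalization.integerNormalization (nonZeroDivisors (Polynomial ℝ)) B, c * d,
    mul_ne_zero (nonZeroDivisors.ne_zero hc0) (nonZeroDivisors.ne_zero hd0), ?_⟩
  apply Polynomial.map_injective φ hinj
  simp only [Polynomial.map_add, Polynomial.map_mul, Polynomial.map_C]
  rw [hc, hd, Algebra.smul_def, Algebra.smul_def, Polynomial.algebraMap_apply,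
    Polynomial.algebraMap_apply, map_mul, Polynomial.C_mul]
  linear_combination (Polynomial.C (φ c) * Polynomial.C (φ d)) * hAB

theorem aux_cont (Q : Polynomial (Polynomial ℝ)) :
    Continuous fun v : ℝ × ℝ => Q.evalEval v.1 v.2 := by
  induction Q using Polynomial.induction_on' with
  | add p q hp hq => simp only [Polynomial.evalEval_add]; exact hp.add hq
  | monomial n a =>
    have : (fun v : ℝ × ℝ => (Polynomial.monomial n a).evalEval v.1 v.2) =
        fun v => a.eval v.1 * v.2 ^ n := by
      funext v
      simp [Polynomial.evalEval]
    rw [this]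
    exact (a.continuous.comp continuous_fst).mul (continuous_snd.pow n)

theorem aux_core (g q : Polynomial (Polynomial ℝ)) (hq : q ≠ 0)
    (hcop : ∀ d, d ∣ g → d ∣ q → IsUnit d) (ε : ℝ) (hε : 0 < ε)
    (hfr : ∃ᶠ v : ℝ × ℝ in 𝓝 (0, 0), 0 < v.1 ∧ |v.2| ≤ v.1 ∧
      ε * |q.evalEval v.1 v.2| ≤ |g.evalEval v.1 v.2|) :
    ∃ (D : ℕ) (F : Polynomial ℝ), 0 < D ∧ Polynomial.X ^ D ∣ F ∧
      ∃ᶠ t : ℝ in 𝓝[>] 0, q.evalEval (t ^ D) (F.eval t) ≠ 0 ∧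
        ε / 2 * |q.evalEval (t ^ D) (F.eval t)| ≤ |g.evalEval (t ^ D) (F.eval t)| := by
  obtain ⟨A, B, r, hr, hAB⟩ := aux_bezout g q hq hcop
  -- the ultrafilter
  obtain ⟨l, hl1, hl2⟩ : ∃ l : Ultrafilter (ℝ × ℝ), (l : Filter (ℝ × ℝ)) ≤ 𝓝 (0, 0) ∧
      ∀ᶠ v : ℝ × ℝ in (l : Filter (ℝ × ℝ)), 0 < v.1 ∧ |v.2| ≤ v.1 ∧
      ε * |q.evalEval v.1 v.2| ≤ |g.evalEval v.1 v.2| := by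
    have hne := frequently_iff_neBot.1 hfr
    refine ⟨@Ultrafilter.of _ _ hne, (@Ultrafilter.of_le _ _ hne).trans inf_le_left, ?_⟩
    have h2 := (@Ultrafilter.of_le _ _ hne).trans inf_le_right
    exact le_principal_iff.1 h2
  let x : ℝ × ℝ → ℝ := fun v => v.1
  have hx : Tendsto x l (𝓝[>] 0) := by
    refine tendsto_nhdsWithin_iff.2 ⟨(continuous_fst.tendsto ((0 : ℝ), (0 : ℝ))).mono_left hl1, ?_⟩
    filter_upwards [hl2] with v hv using hv.1
  -- choose an algebraic point
  obtain ⟨y, H, hH, hHy, hyx, hyg⟩ : ∃ (y : ℝ × ℝ → ℝ) (H : Polynomial (Polynomial ℝ)), H ≠ 0 ∧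
      (∀ᶠ v in (l : Filter (ℝ × ℝ)), H.evalEval (x v) (y v) = 0) ∧
      (∀ᶠ v in (l : Filter (ℝ × ℝ)), |y v| ≤ x v) ∧
      (∀ᶠ v in (l : Filter (ℝ × ℝ)), ε * |q.evalEval (x v) (y v)| ≤ |g.evalEval (x v) (y v)|) := by
    by_cases hc : ∀ᶠ v in (l : Filter (ℝ × ℝ)),
        ε * |q.evalEval (x v) (-x v)| ≤ |g.evalEval (x v) (-x v)|
    · refine ⟨fun v => -x v, Polynomial.X + Polynomial.C Polynomial.X,
        Polynomial.X_add_C_ne_zero _, ?_, ?_, hc⟩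
      · refine Eventually.of_forall fun v => ?_
        simp [Polynomial.evalEval]
      · filter_upwards [hl2] with v hv
        rw [abs_neg, abs_of_pos hv.1]
    · rw [← Ultrafilter.eventually_not] at hc
      have hex : ∀ v : ℝ × ℝ, ∃ s : ℝ, (0 < v.1 ∧ |v.2| ≤ v.1 ∧
          ε * |q.evalEval v.1 v.2| ≤ |g.evalEval v.1 v.2|) →
          ¬ (ε * |q.evalEval (x v) (-x v)| ≤ |g.evalEval (x v) (-x v)|) →
          |s| ≤ x v ∧ ε * |q.evalEval (x v) s| = |g.evalEval (x v) s| := by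
        intro v
        by_cases h : (0 < v.1 ∧ |v.2| ≤ v.1 ∧
          ε * |q.evalEval v.1 v.2| ≤ |g.evalEval v.1 v.2|) ∧
          ¬ (ε * |q.evalEval (x v) (-x v)| ≤ |g.evalEval (x v) (-x v)|)
        · obtain ⟨⟨h1, h2, h3⟩, h4⟩ := h
          have h2' := abs_le.1 h2
          have hcont : Continuous fun s : ℝ => |g.evalEval (x v) s| - ε * |q.evalEval (x v) s| := by
            have hg := (aux_cont g).comp (Continuous.prodMk_right (x v))
            have hq := (aux_cont q).comp (Continuous.prodMk_right (x v))
            exact hg.abs.sub (hq.abs.const_mul ε)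
          push Not at h4
          obtain ⟨s, hs, hs0⟩ := intermediate_value_Icc (a := -x v) (b := v.2) h2'.1
            hcont.continuousOn (show (0 : ℝ) ∈ _ from ⟨by linarith, by
              have : x v = v.1 := rfl
              rw [this]; linarith⟩)
          refine ⟨s, fun _ _ => ⟨abs_le.2 ⟨hs.1, hs.2.trans h2'.2⟩, ?_⟩⟩
          simp only at hs0
          linarith
        · exact ⟨0, fun h1 h2 => absurd ⟨h1, h2⟩ h⟩
      choose y hy using hex
      refine ⟨y, g ^ 2 - Polynomial.C (Polynomial.C (ε ^ 2)) * q ^ 2, ?_, ?_, ?_, ?_⟩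
      · intro h0
        obtain ⟨v, hv⟩ := hc.exists
        apply hv
        have h1 := congrArg (fun P => Polynomial.evalEval (x v) (-x v) P) h0
        simp only [Polynomial.evalEval_sub, Polynomial.evalEval_mul, Polynomial.evalEval_pow,
          Polynomial.evalEval_C, Polynomial.eval_C, Polynomial.evalEval_zero] at h1
        have h2 : |g.evalEval (x v) (-x v)| = |ε * q.evalEval (x v) (-x v)| := by
          rw [← sq_eq_sq_iff_abs_eq_abs]
          linarith
        rw [h2, abs_mul, abs_of_pos hε]
      · filter_upwards [hl2, hc] with v h1 h2
        have h3 := (hy v h1 h2).2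
        simp only [Polynomial.evalEval_sub, Polynomial.evalEval_mul, Polynomial.evalEval_pow,
          Polynomial.evalEval_C, Polynomial.eval_C]
        rw [← sq_abs (g.evalEval (x v) (y v)), ← h3, mul_pow, sq_abs, sub_self]
      · filter_upwards [hl2, hc] with v h1 h2
        exact (hy v h1 h2).1
      · filter_upwards [hl2, hc] with v h1 h2
        exact (hy v h1 h2).2.le
  have hyO : y =O[(l : Filter (ℝ × ℝ))] fun v => x v ^ (1 : ℝ) := by
    refine IsBigO.of_bound 1 ?_
    filter_upwards [hyx] with v hv
    rw [Real.rpow_one, one_mul]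
    exact hv.trans (le_abs_self _)
  have hx0 : Tendsto x l (𝓝 0) := hx.mono_right nhdsWithin_le_nhds
  have hy0 : Tendsto y l (𝓝 0) := by
    refine hyO.trans_tendsto ?_
    simpa using hx0
  have hbdd : ∀ (P : Polynomial (Polynomial ℝ)) (z : ℝ × ℝ → ℝ), Tendsto z l (𝓝 0) →
      (fun v => P.evalEval (x v) (z v)) =O[(l : Filter (ℝ × ℝ))] fun _ => (1 : ℝ) := by
    intro P z hz
    exact (((aux_cont P).tendsto (0, 0)).comp (hx0.prodMk_nhds hz)).isBigO_one ℝ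
  -- lower bound for g
  obtain ⟨m, hm⟩ := aux_poly_pow hx r hr
  have hqg : (fun v => q.evalEval (x v) (y v)) =O[(l : Filter (ℝ × ℝ))]
      fun v => g.evalEval (x v) (y v) := by
    refine IsBigO.of_bound ε⁻¹ ?_
    filter_upwards [hyg] with v hv
    rw [inv_mul_eq_div, le_div_iff₀ hε, mul_comm]
    exact hv
  have hgm : (fun v => x v ^ (m : ℝ)) =O[(l : Filter (ℝ × ℝ))]
      fun v => g.evalEval (x v) (y v) := by
    have h1 : (fun v => r.eval (x v)) =O[(l : Filter (ℝ × ℝ))]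
        fun v => g.evalEval (x v) (y v) := by
      have h2 := ((hbdd A y hy0).mul (isBigO_refl (fun v => g.evalEval (x v) (y v))
        (l : Filter (ℝ × ℝ)))).add ((hbdd B y hy0).mul hqg)
      simp only [one_mul] at h2
      refine (EventuallyEq.isBigO (Eventually.of_forall fun v => ?_)).trans h2
      have := congrArg (fun P => Polynomial.evalEval (x v) (y v) P) hAB
      simp only [Polynomial.evalEval_add, Polynomial.evalEval_mul, Polynomial.evalEval_C] at this
      exact this.symm
    have h3 := hm.2.trans h1
    simpa only [Real.rpow_natCast] using h3
  -- approximation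
  obtain ⟨D, F, hD, hF, hFy⟩ := aux_puiseux l x y hx hyO H hH hHy ((m + 1 : ℕ) : ℝ)
  -- perturbation
  obtain ⟨δ, hδ⟩ : ∃ δ : ℝ, q.eval₂ ((Polynomial.expand ℝ D : Polynomial ℝ →ₐ[ℝ] Polynomial ℝ) :
      Polynomial ℝ →+* Polynomial ℝ) (F + Polynomial.C δ * Polynomial.X ^ (D * (m + 1))) ≠ 0 := by
    by_contra hcon
    push Not at hcon
    have hq' : q.map ((Polynomial.expand ℝ D : Polynomial ℝ →ₐ[ℝ] Polynomial ℝ) :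
        Polynomial ℝ →+* Polynomial ℝ) ≠ 0 := by
      intro h0
      exact hq (Polynomial.map_injective _ (Polynomial.expand_injective hD)
        (h0.trans (Polynomial.map_zero _).symm))
    have hfin := Polynomial.finite_setOfPred_isRoot hq'
    have hinf : (Set.range fun δ : ℝ =>
        F + Polynomial.C δ * Polynomial.X ^ (D * (m + 1))).Infinite := by
      refine Set.infinite_range_of_injective fun a b hab => ?_
      have h1 := congrArg (fun P => Polynomial.coeff P (D * (m + 1))) hab
      simpa using h1
    refine hinf (hfin.subset ?_)
    rintro _ ⟨δ, rfl⟩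
    simp only [Set.mem_ofPred_eq, Polynomial.IsRoot, Polynomial.eval_map]
    exact hcon δ
  set F' := F + Polynomial.C δ * Polynomial.X ^ (D * (m + 1)) with hF'
  have hF'd : Polynomial.X ^ D ∣ F' :=
    dvd_add hF (Dvd.dvd.mul_left (pow_dvd_pow _ (Nat.le_mul_of_pos_right _ (Nat.succ_pos _))) _)
  refine ⟨D, F', hD, hF'd, ?_⟩
  have hF'v : ∀ᶠ v in (l : Filter (ℝ × ℝ)), F'.eval (x v ^ (1 / (D : ℝ))) =
      F.eval (x v ^ (1 / (D : ℝ))) + δ * x v ^ ((m + 1 : ℕ) : ℝ) := by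
    filter_upwards [aux_pos hx] with v hv
    rw [hF']
    simp only [Polynomial.eval_add, Polynomial.eval_mul, Polynomial.eval_C, Polynomial.eval_pow,
      Polynomial.eval_X]
    rw [pow_mul, aux_root_pow_self hv.le hD, Real.rpow_natCast]
  have hF'y : (fun v => F'.eval (x v ^ (1 / (D : ℝ))) - y v) =O[(l : Filter (ℝ × ℝ))]
      fun v => x v ^ ((m + 1 : ℕ) : ℝ) := by
    have h1 := (isBigO_const_mul_self δ (fun v => x v ^ ((m + 1 : ℕ) : ℝ))
      (l : Filter (ℝ × ℝ))).sub hFy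
    refine (EventuallyEq.isBigO ?_).trans h1
    filter_upwards [hF'v] with v hv
    rw [hv]
    ring
  have hxm0 : Tendsto (fun v => x v ^ ((m + 1 : ℕ) : ℝ)) l (𝓝 0) := by
    have := aux_rpow_o hx (a := 0) (b := ((m + 1 : ℕ) : ℝ)) (by positivity)
    simpa using this
  have hF'0 : Tendsto (fun v => F'.eval (x v ^ (1 / (D : ℝ)))) l (𝓝 0) := by
    have := (hF'y.trans_tendsto hxm0).add hy0
    simpa using this
  have hdiff : ∀ P : Polynomial (Polynomial ℝ),
      (fun v => P.evalEval (x v) (F'.eval (x v ^ (1 / (D : ℝ)))) - P.evalEval (x v) (y v))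
        =o[(l : Filter (ℝ × ℝ))] fun v => g.evalEval (x v) (y v) := by
    intro P
    choose η hη1 hη2 using fun v => aux_mvt P (x v) 0 (y v) (F'.eval (x v ^ (1 / (D : ℝ))))
    have hη : Tendsto η l (𝓝 0) := by
      refine squeeze_zero_norm (a := fun v => |y v - 0| + |F'.eval (x v ^ (1 / (D : ℝ))) - 0|)
        (fun v => by simpa using hη1 v) ?_
      simpa using hy0.abs.add hF'0.abs
    have h1 := (hbdd P.derivative η hη).mul hF'y
    simp only [one_mul] at h1
    refine (IsBigO.trans (EventuallyEq.isBigO (Eventually.of_forall fun v => hη2 v)) h1).trans_isLittleO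
      ((aux_rpow_o hx ?_).trans_isBigO hgm)
    push_cast
    linarith
  have hκ : 0 < 1 / (2 + ε) := by positivity
  have hev : ∀ᶠ v in (l : Filter (ℝ × ℝ)),
      q.evalEval ((x v ^ (1 / (D : ℝ))) ^ D) (F'.eval (x v ^ (1 / (D : ℝ)))) ≠ 0 ∧
        ε / 2 * |q.evalEval ((x v ^ (1 / (D : ℝ))) ^ D) (F'.eval (x v ^ (1 / (D : ℝ))))| ≤
          |g.evalEval ((x v ^ (1 / (D : ℝ))) ^ D) (F'.eval (x v ^ (1 / (D : ℝ))))| := by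
    have hnz : ∀ᶠ v in (l : Filter (ℝ × ℝ)),
        q.evalEval ((x v ^ (1 / (D : ℝ))) ^ D) (F'.eval (x v ^ (1 / (D : ℝ)))) ≠ 0 := by
      obtain ⟨k, hk⟩ := aux_poly_pow (aux_root hx hD) _ hδ
      filter_upwards [hk.eq_zero_iff, aux_pos (aux_root hx hD)] with v h1 h2 h3
      rw [aux_subst] at h1
      exact pow_ne_zero k h2.ne' (h1.1 h3)
    filter_upwards [hnz, (hdiff g).bound hκ, (hdiff q).bound hκ, hyg, aux_pos hx]
      with v h1 h2 h3 h4 h5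
    refine ⟨h1, ?_⟩
    rw [aux_root_pow_self h5.le hD]
    simp only [Real.norm_eq_abs] at h2 h3
    set a := g.evalEval (x v) (F'.eval (x v ^ (1 / (D : ℝ))))
    set b := q.evalEval (x v) (F'.eval (x v ^ (1 / (D : ℝ))))
    set a' := g.evalEval (x v) (y v)
    set b' := q.evalEval (x v) (y v)
    have e1 : |a'| ≤ |a| + |a - a'| := by
      have := abs_sub_abs_le_abs_sub a' a
      rw [abs_sub_comm a' a] at this
      linarith
    have e2 : |b| ≤ |b'| + |b - b'| := by
      have := abs_sub_abs_le_abs_sub b b'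
      linarith
    have e3 : 1 / (2 + ε) * |a'| * (2 + ε) = |a'| := by
      field_simp
    set k := 1 / (2 + ε) * |a'|
    have e4 : ε * |b| ≤ ε * |b'| + ε * k := by
      rw [← mul_add]
      exact mul_le_mul_of_nonneg_left (by linarith) hε.le
    linarith
  have htend : Tendsto (fun v => x v ^ (1 / (D : ℝ))) l (𝓝[>] 0) := aux_root hx hD
  exact htend.frequently hev.frequently

end Core4


theorem aux_typeI (D : ℕ) (hD : 0 < D) (F : Polynomial ℝ) (hF : Polynomial.X ^ D ∣ F) :
    TypeI fun s => F.eval (|s| ^ (1 / (D : ℝ))) := by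
  have hD' : (0 : ℚ) < D := by exact_mod_cast hD
  refine ⟨F.support.card, fun k => F.coeff (F.support.orderEmbOfFin rfl k),
    fun k => ((F.support.orderEmbOfFin rfl k : ℕ) : ℚ) / D, ?_, ?_, ?_, ?_⟩
  · intro k
    exact Polynomial.mem_support_iff.1 (F.support.orderEmbOfFin_mem rfl k)
  · intro i j hij
    have h1 : F.support.orderEmbOfFin rfl i < F.support.orderEmbOfFin rfl j :=
      (F.support.orderEmbOfFin rfl).strictMono hij
    have h2 : ((F.support.orderEmbOfFin rfl i : ℕ) : ℚ) < (F.support.orderEmbOfFin rfl j : ℕ) := by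
      exact_mod_cast h1
    exact div_lt_div_of_pos_right h2 hD'
  · intro k
    have h1 := Polynomial.mem_support_iff.1 (F.support.orderEmbOfFin_mem rfl k)
    have h2 : D ≤ F.support.orderEmbOfFin rfl k := by
      by_contra hlt
      exact h1 (Polynomial.X_pow_dvd_iff.1 hF _ (not_le.1 hlt))
    rw [le_div_iff₀ hD', one_mul]
    exact_mod_cast h2
  · intro t
    beta_reduce
    rw [Polynomial.eval_eq_sum, Polynomial.sum]
    have h3 : Finset.univ.map (F.support.orderEmbOfFin rfl).toEmbedding = F.support := by
      simp
    conv_lhs => rw [← h3]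
    rw [Finset.sum_map]
    refine Finset.sum_congr rfl fun k _ => ?_
    simp only [RelEmbedding.coe_toEmbedding]
    rw [aux_root_pow (abs_nonneg t)]
    push_cast
    rfl

theorem aux_typeI_tendsto {Φ : ℝ → ℝ} (h : TypeI Φ) (c : ℝ) :
    Tendsto (fun x => Φ (x - c)) (𝓝 c) (𝓝 0) := by
  obtain ⟨N, φ, e, -, -, he, hΦ⟩ := h
  have h1 : (fun x => Φ (x - c)) = fun x => ∑ k, φ k * |x - c| ^ ((e k : ℝ)) := by
    funext x; exact hΦ _
  rw [h1]
  have hpos : ∀ k, (0 : ℝ) < e k := fun k => by exact_mod_cast one_pos.trans_le (he k)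
  have hc : Continuous fun x : ℝ => ∑ k, φ k * |x - c| ^ ((e k : ℝ)) := by
    refine continuous_finsetSum _ fun k _ => continuous_const.mul ?_
    exact (continuous_id.sub continuous_const).abs.rpow_const fun _ => Or.inr (hpos k).le
  have h2 := hc.tendsto c
  have h3 : ∑ k, φ k * |c - c| ^ ((e k : ℝ)) = 0 := by
    refine Finset.sum_eq_zero fun k _ => ?_
    rw [sub_self, abs_zero, Real.zero_rpow (hpos k).ne', mul_zero]
  rwa [h3] at h2

theorem aux_pev_cont (P : MvPolynomial (Fin 2) ℝ) : Continuous (pev P) := by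
  unfold pev
  refine (MvPolynomial.continuous_eval P).comp ?_
  refine continuous_pi fun i => ?_
  fin_cases i
  · exact continuous_fst
  · exact continuous_snd

/-- The affine change of coordinates into iterated polynomials. -/
noncomputable def auxPhi (σ x₀ y₀ : ℝ) : MvPolynomial (Fin 2) ℝ →+* Polynomial (Polynomial ℝ) :=
  MvPolynomial.eval₂Hom (Polynomial.C.comp Polynomial.C)
    ![Polynomial.C (Polynomial.C σ * Polynomial.X + Polynomial.C x₀),
      Polynomial.X + Polynomial.C (Polynomial.C y₀)]

/-- The inverse change of coordinates. -/
noncomputable def auxPsi (σ x₀ y₀ : ℝ) : Polynomial (Polynomial ℝ) →+* MvPolynomial (Fin 2) ℝ :=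
  Polynomial.eval₂RingHom
    (Polynomial.eval₂RingHom MvPolynomial.C
      (MvPolynomial.C σ * (MvPolynomial.X 0 - MvPolynomial.C x₀)))
    (MvPolynomial.X 1 - MvPolynomial.C y₀)

theorem auxPsi_Phi {σ : ℝ} (hσ : σ * σ = 1) (x₀ y₀ : ℝ) (P : MvPolynomial (Fin 2) ℝ) :
    auxPsi σ x₀ y₀ (auxPhi σ x₀ y₀ P) = P := by
  have h : (auxPsi σ x₀ y₀).comp (auxPhi σ x₀ y₀) = RingHom.id _ := by
    apply MvPolynomial.ringHom_ext
    · intro r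
      simp [auxPsi, auxPhi]
    · intro i
      fin_cases i
      · simp [auxPsi, auxPhi, ← mul_assoc, ← MvPolynomial.C_mul, hσ]
      · simp [auxPsi, auxPhi]
  exact congrArg (fun f => f P) h

theorem auxPhi_Psi {σ : ℝ} (hσ : σ * σ = 1) (x₀ y₀ : ℝ) (P : Polynomial (Polynomial ℝ)) :
    auxPhi σ x₀ y₀ (auxPsi σ x₀ y₀ P) = P := by
  have hh : (Polynomial.C (Polynomial.C σ) * Polynomial.C (Polynomial.C σ) :
      Polynomial (Polynomial ℝ)) = 1 := by
    rw [← Polynomial.C_mul, ← Polynomial.C_mul, hσ, Polynomial.C_1, Polynomial.C_1]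
  have h : (auxPhi σ x₀ y₀).comp (auxPsi σ x₀ y₀) = RingHom.id _ := by
    apply Polynomial.ringHom_ext'
    · apply Polynomial.ringHom_ext'
      · ext r
        simp [auxPsi, auxPhi]
      · simp [auxPsi, auxPhi, ← mul_assoc, hh]
    · simp [auxPsi, auxPhi]
  exact congrArg (fun f => f P) h

theorem auxPhi_eval (σ x₀ y₀ : ℝ) (P : MvPolynomial (Fin 2) ℝ) (s w : ℝ) :
    (auxPhi σ x₀ y₀ P).evalEval s w = pev P (σ * s + x₀, w + y₀) := by
  have h : (Polynomial.evalEvalRingHom s w).comp (auxPhi σ x₀ y₀) =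
      MvPolynomial.eval ![σ * s + x₀, w + y₀] := by
    apply MvPolynomial.ringHom_ext
    · intro r
      simp [auxPhi]
    · intro i
      fin_cases i
      · simp [auxPhi]
      · simp [auxPhi]
  exact congrArg (fun f => f P) h

theorem aux_sector (p q : MvPolynomial (Fin 2) ℝ) (hq : q ≠ 0)
    (hcop : ∀ d : MvPolynomial (Fin 2) ℝ, d ∣ p → d ∣ q → IsUnit d)
    (x₀ y₀ a : ℝ) (h : ∀ Φ : ℝ → ℝ, TypeI Φ →
        Tendsto (fun x => pev p (x, y₀ + Φ (x - x₀)) / pev q (x, y₀ + Φ (x - x₀)))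
          (𝓝[{x : ℝ | x ≠ x₀ ∧ pev q (x, y₀ + Φ (x - x₀)) ≠ 0}] x₀) (𝓝 a))
    (σ : ℝ) (hσ : σ * σ = 1) (ε : ℝ) (hε : 0 < ε) :
    ∀ᶠ v : ℝ × ℝ in 𝓝 (0, 0), 0 < v.1 → |v.2| ≤ v.1 →
      |pev p (σ * v.1 + x₀, v.2 + y₀) - a * pev q (σ * v.1 + x₀, v.2 + y₀)| <
        ε * |pev q (σ * v.1 + x₀, v.2 + y₀)| := by
  by_contra hcon
  rw [Filter.not_eventually] at hcon
  set φ := auxPhi σ x₀ y₀ with hφ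
  have hg : ∀ s w, (φ (p - MvPolynomial.C a * q)).evalEval s w =
      pev p (σ * s + x₀, w + y₀) - a * pev q (σ * s + x₀, w + y₀) := by
    intro s w
    rw [hφ, auxPhi_eval]
    simp [pev]
  have hQ : ∀ s w, (φ q).evalEval s w = pev q (σ * s + x₀, w + y₀) :=
    fun s w => auxPhi_eval σ x₀ y₀ q s w
  obtain ⟨D, F, hD, hF, hfr⟩ := aux_core (φ (p - MvPolynomial.C a * q)) (φ q) (by
      intro h0
      apply hq
      rw [← auxPsi_Phi hσ x₀ y₀ q, ← hφ, h0, map_zero]) (by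
      intro d hd1 hd2
      have e1 := map_dvd (auxPsi σ x₀ y₀) hd1
      have e2 := map_dvd (auxPsi σ x₀ y₀) hd2
      rw [hφ, auxPsi_Phi hσ] at e1 e2
      have e3 : auxPsi σ x₀ y₀ d ∣ p := by
        have := dvd_add e1 (e2.mul_left (MvPolynomial.C a))
        simpa using this
      have e4 := (hcop _ e3 e2).map (auxPhi σ x₀ y₀)
      rwa [auxPhi_Psi hσ] at e4) ε hε (by
      refine hcon.mono fun v hv => ?_
      push Not at hv
      rw [hg, hQ]
      exact hv)
  simp only [hg, hQ] at hfr
  have ht := h _ (aux_typeI D hD F hF)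
  have hball := ht.eventually (Metric.ball_mem_nhds a (half_pos hε))
  rw [eventually_nhdsWithin_iff] at hball
  have htend : Tendsto (fun t : ℝ => σ * t ^ D + x₀) (𝓝[>] 0) (𝓝 x₀) := by
    have hc : Continuous fun t : ℝ => σ * t ^ D + x₀ := by fun_prop
    have := hc.tendsto 0
    simp only [zero_pow hD.ne', mul_zero, zero_add] at this
    exact this.mono_left nhdsWithin_le_nhds
  have hσabs : |σ| = 1 := by
    have h1 : |σ| * |σ| = 1 := by rw [← abs_mul, hσ, abs_one]
    nlinarith [abs_nonneg σ]
  obtain ⟨t, ⟨h1, h2⟩, h3, h4⟩ :=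
    (hfr.and_eventually ((htend.eventually hball).and self_mem_nhdsWithin)).exists
  have h4' : (0 : ℝ) < t := h4
  have h5 : |σ * t ^ D + x₀ - x₀| ^ (1 / (D : ℝ)) = t := by
    rw [add_sub_cancel_right, abs_mul, hσabs, one_mul, abs_of_pos (pow_pos h4' D), one_div]
    exact Real.pow_rpow_inv_natCast h4'.le hD.ne'
  simp only [Set.mem_ofPred_eq, h5, add_comm y₀] at h3
  have h6 := h3 ⟨by
    intro h0
    have : σ * t ^ D = 0 := by linarith
    rcases mul_eq_zero.1 this with h | h
    · rw [h] at hσ; norm_num at hσ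
    · exact (pow_pos h4' D).ne' h, h1⟩
  rw [Real.dist_eq] at h6
  rw [div_sub' h1, abs_div, div_lt_iff₀ (abs_pos.2 h1), mul_comm _ a] at h6
  linarith

theorem aux_half (p q : MvPolynomial (Fin 2) ℝ) (hq : q ≠ 0)
    (hcop : ∀ d : MvPolynomial (Fin 2) ℝ, d ∣ p → d ∣ q → IsUnit d)
    (x₀ y₀ a : ℝ) (h : ∀ Φ : ℝ → ℝ, TypeI Φ →
        Tendsto (fun x => pev p (x, y₀ + Φ (x - x₀)) / pev q (x, y₀ + Φ (x - x₀)))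
          (𝓝[{x : ℝ | x ≠ x₀ ∧ pev q (x, y₀ + Φ (x - x₀)) ≠ 0}] x₀) (𝓝 a))
    (ε : ℝ) (hε : 0 < ε) :
    ∀ᶠ v : ℝ × ℝ in 𝓝 (x₀, y₀), v ≠ (x₀, y₀) → |v.2 - y₀| ≤ |v.1 - x₀| →
      |pev p v - a * pev q v| < ε * |pev q v| := by
  have key : ∀ σ : ℝ, σ * σ = 1 → ∀ᶠ v : ℝ × ℝ in 𝓝 (x₀, y₀), 0 < σ * (v.1 - x₀) →
      |v.2 - y₀| ≤ σ * (v.1 - x₀) → |pev p v - a * pev q v| < ε * |pev q v| := by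
    intro σ hσ
    have hc : Continuous fun v : ℝ × ℝ => (σ * (v.1 - x₀), v.2 - y₀) := by fun_prop
    have ht := hc.tendsto (x₀, y₀)
    simp only [sub_self, mul_zero] at ht
    filter_upwards [ht.eventually (aux_sector p q hq hcop x₀ y₀ a h σ hσ ε hε)] with v hv
    have e : σ * (σ * (v.1 - x₀)) + x₀ = v.1 := by
      rw [← mul_assoc, hσ]; ring
    simp only [e, sub_add_cancel] at hv
    exact hv
  filter_upwards [key 1 (by norm_num), key (-1) (by norm_num)] with v h1 h2 hv hle
  rcases lt_trichotomy (v.1 - x₀) 0 with h3 | h3 | h3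
  · rw [abs_of_neg h3] at hle
    exact h2 (by linarith) (by linarith)
  · exfalso
    apply hv
    rw [h3, abs_zero] at hle
    have := abs_nonpos_iff.1 hle
    exact Prod.ext (by simpa using sub_eq_zero.1 h3) (by simpa using sub_eq_zero.1 this)
  · rw [abs_of_pos h3] at hle
    exact h1 (by linarith) (by linarith)

theorem aux_swap_pev (P : MvPolynomial (Fin 2) ℝ) (x y : ℝ) :
    pev (MvPolynomial.rename (Equiv.swap (0 : Fin 2) 1) P) (x, y) = pev P (y, x) := by
  unfold pev
  rw [MvPolynomial.eval_rename]
  congr 2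
  funext i
  fin_cases i <;> simp

theorem aux_back (p q : MvPolynomial (Fin 2) ℝ) (hq : q ≠ 0)
    (hcop : ∀ d : MvPolynomial (Fin 2) ℝ, d ∣ p → d ∣ q → IsUnit d)
    (x₀ y₀ a : ℝ)
    (h : ∀ Φ : ℝ → ℝ, TypeI Φ →
        Tendsto (fun x => pev p (x, y₀ + Φ (x - x₀)) / pev q (x, y₀ + Φ (x - x₀)))
          (𝓝[{x : ℝ | x ≠ x₀ ∧ pev q (x, y₀ + Φ (x - x₀)) ≠ 0}] x₀) (𝓝 a) ∧
        Tendsto (fun y => pev p (x₀ + Φ (y - y₀), y) / pev q (x₀ + Φ (y - y₀), y))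
          (𝓝[{y : ℝ | y ≠ y₀ ∧ pev q (x₀ + Φ (y - y₀), y) ≠ 0}] y₀) (𝓝 a)) :
    Tendsto (fun v : ℝ × ℝ => pev p v / pev q v)
        (𝓝[{v : ℝ × ℝ | v ≠ (x₀, y₀) ∧ pev q v ≠ 0}] (x₀, y₀)) (𝓝 a) := by
  rw [Metric.tendsto_nhds]
  intro ε hε
  rw [eventually_nhdsWithin_iff]
  let e := MvPolynomial.renameEquiv ℝ (Equiv.swap (0 : Fin 2) 1)
  have h2 := aux_half (e p) (e q) (by simpa using hq) (by
    intro d hd1 hd2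
    have e1 := map_dvd e.symm hd1
    have e2 := map_dvd e.symm hd2
    rw [AlgEquiv.symm_apply_apply] at e1 e2
    have e3 := (hcop _ e1 e2).map e
    rwa [AlgEquiv.apply_symm_apply] at e3) y₀ x₀ a (by
    intro Φ hΦ
    have := (h Φ hΦ).2
    simpa only [e, MvPolynomial.renameEquiv_apply, aux_swap_pev] using this) ε hε
  have hc := (continuous_swap (X := ℝ) (Y := ℝ)).tendsto (x₀, y₀)
  filter_upwards [aux_half p q hq hcop x₀ y₀ a (fun Φ hΦ => (h Φ hΦ).1) ε hε,
    hc.eventually h2] with v h3 h4 hv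
  obtain ⟨hv1, hv2⟩ := hv
  have h5 : |pev p v - a * pev q v| < ε * |pev q v| := by
    rcases le_total |v.2 - y₀| |v.1 - x₀| with h6 | h6
    · exact h3 hv1 h6
    · obtain ⟨v1, v2⟩ := v
      have := h4 (by
        intro h7
        apply hv1
        simp only [Prod.swap_prod_mk, Prod.mk.injEq] at h7 ⊢
        exact h7.symm) h6
      simpa only [e, MvPolynomial.renameEquiv_apply, aux_swap_pev, Prod.swap_prod_mk] using this
  rw [Real.dist_eq, div_sub' hv2, abs_div, div_lt_iff₀ (abs_pos.2 hv2), mul_comm _ a]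
  exact h5

theorem limit_iff_typeI_curve_limits (p q : MvPolynomial (Fin 2) ℝ) (hq : q ≠ 0)
    (hcop : ∀ d : MvPolynomial (Fin 2) ℝ, d ∣ p → d ∣ q → IsUnit d)
    (x₀ y₀ a : ℝ) :
    Tendsto (fun v : ℝ × ℝ => pev p v / pev q v)
        (𝓝[{v : ℝ × ℝ | v ≠ (x₀, y₀) ∧ pev q v ≠ 0}] (x₀, y₀)) (𝓝 a) ↔
      ∀ Φ : ℝ → ℝ, TypeI Φ →
        Tendsto (fun x => pev p (x, y₀ + Φ (x - x₀)) / pev q (x, y₀ + Φ (x - x₀)))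
          (𝓝[{x : ℝ | x ≠ x₀ ∧ pev q (x, y₀ + Φ (x - x₀)) ≠ 0}] x₀) (𝓝 a) ∧
        Tendsto (fun y => pev p (x₀ + Φ (y - y₀), y) / pev q (x₀ + Φ (y - y₀), y))
          (𝓝[{y : ℝ | y ≠ y₀ ∧ pev q (x₀ + Φ (y - y₀), y) ≠ 0}] y₀) (𝓝 a) := by
  refine ⟨fun h Φ hΦ => ⟨?_, ?_⟩, aux_back p q hq hcop x₀ y₀ a⟩
  · refine h.comp (f := fun x => (x, y₀ + Φ (x - x₀))) (tendsto_nhdsWithin_iff.2 ⟨?_, ?_⟩)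
    · have h1 := (aux_typeI_tendsto hΦ x₀).const_add y₀
      rw [add_zero] at h1
      exact (tendsto_id.prodMk_nhds h1).mono_left nhdsWithin_le_nhds
    · filter_upwards [self_mem_nhdsWithin] with x hx
      exact ⟨fun h0 => hx.1 (congrArg Prod.fst h0), hx.2⟩
  · refine h.comp (f := fun y => (x₀ + Φ (y - y₀), y)) (tendsto_nhdsWithin_iff.2 ⟨?_, ?_⟩)
    · have h1 := (aux_typeI_tendsto hΦ y₀).const_add x₀
      rw [add_zero] at h1
      exact (h1.prodMk_nhds tendsto_id).mono_left nhdsWithin_le_nhds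
    · filter_upwards [self_mem_nhdsWithin] with y hy
      exact ⟨fun h0 => hy.1 (congrArg Prod.snd h0), hy.2⟩
end

section
/- For each point a = (a₁,a₂) in the open unit square (0,1)², define f_a(x,y) = (x−a₁)(y−a₂)/((x−a₁)² + (y−a₂)²) for (x,y) ≠ a and f_a(a) = 0. Then each f_a is bounded by 1/2 on [0,1]², and for any two distinct points a ≠ b of (0,1)² one has sup_{(x,y) ∈ [0,1]²} |f_a(x,y) − f_b(x,y)| ≥ 1/2. Consequently the set of bounded values-functions of rational functions on [0,1]², equipped with the uniform (sup) metric, contains an uncountable 1/2-separated family and hence is not separable. -/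
open MvPolynomial Filter Topology

/-- The closed unit square `[0,1]²`. -/
def ClosedSq : Set (ℝ × ℝ) := {v | v.1 ∈ Set.Icc (0 : ℝ) 1 ∧ v.2 ∈ Set.Icc (0 : ℝ) 1}

/-- The open unit square `(0,1)²`. -/
def OpenSq : Set (ℝ × ℝ) := {v | v.1 ∈ Set.Ioo (0 : ℝ) 1 ∧ v.2 ∈ Set.Ioo (0 : ℝ) 1}

/-- The function `f_a(x,y) = (x-a₁)(y-a₂)/((x-a₁)² + (y-a₂)²)` (with value `0` at `a`,
by the junk value of division by zero). -/
noncomputable def F16 (a v : ℝ × ℝ) : ℝ :=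
  (v.1 - a.1) * (v.2 - a.2) / ((v.1 - a.1) ^ 2 + (v.2 - a.2) ^ 2)

/-- `g` is the values-function on `ℝ²` of a rational function bounded on `[0,1]²`. -/
def RatBoundedOnSq (g : ℝ × ℝ → ℝ) : Prop :=
  ∃ p q : MvPolynomial (Fin 2) ℝ, q ≠ 0 ∧
    (∀ d : MvPolynomial (Fin 2) ℝ, d ∣ p → d ∣ q → IsUnit d) ∧
    (∃ M : ℝ, ∀ v ∈ ClosedSq, |pev p v / pev q v| ≤ M) ∧
    ∀ v : ℝ × ℝ, g v = pev p v / pev q v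

theorem hlp_bound (a v : ℝ × ℝ) : |F16 a v| ≤ 1 / 2 := by
  unfold F16
  set x := v.1 - a.1
  set y := v.2 - a.2
  rcases eq_or_lt_of_le (by positivity : 0 ≤ x ^ 2 + y ^ 2) with h | h
  · rw [← h]; norm_num
  · rw [abs_le, le_div_iff₀ h, div_le_iff₀ h]
    constructor <;> nlinarith [sq_nonneg (x + y), sq_nonneg (x - y)]

theorem hlp_sep (a b : ℝ × ℝ) (ha : a ∈ OpenSq) (hab : a ≠ b) (s : ℝ)
    (hs : ∀ v ∈ ClosedSq, |F16 a v - F16 b v| ≤ s) : 1 / 2 ≤ s := by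
  have hne : (a.1 - b.1) ^ 2 + (a.2 - b.2) ^ 2 ≠ 0 := by
    intro h
    apply hab
    ext <;> nlinarith [sq_nonneg (a.1 - b.1), sq_nonneg (a.2 - b.2)]
  have hc : ContinuousAt (F16 b) a := by
    unfold F16
    refine ContinuousAt.div₀ (by fun_prop) (by fun_prop) ?_
    exact hne
  have key : ∀ σ : ℝ, σ ^ 2 = 1 → |σ / 2 - F16 b a| ≤ s := by
    intro σ hσ
    have hg : Tendsto (fun t : ℝ => ((a.1 + t, a.2 + σ * t) : ℝ × ℝ)) (𝓝[≠] 0) (𝓝 a) := by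
      have : Continuous (fun t : ℝ => ((a.1 + t, a.2 + σ * t) : ℝ × ℝ)) := by fun_prop
      have h2 := this.tendsto 0
      simp only [add_zero, mul_zero] at h2
      exact h2.mono_left nhdsWithin_le_nhds
    have hlim : Tendsto (fun t : ℝ => |σ / 2 - F16 b (a.1 + t, a.2 + σ * t)|) (𝓝[≠] 0)
        (𝓝 |σ / 2 - F16 b a|) :=
      (tendsto_const_nhds.sub (hc.tendsto.comp hg)).abs
    refine le_of_tendsto hlim ?_
    have hnb : ClosedSq ∈ 𝓝 a := by
      have h1 := Icc_mem_nhds ha.1.1 ha.1.2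
      have h2 := Icc_mem_nhds ha.2.1 ha.2.2
      exact prod_mem_nhds h1 h2
    filter_upwards [hg hnb, self_mem_nhdsWithin] with t ht ht0
    have h := hs _ ht
    have ht0' : t ≠ 0 := ht0
    have e : F16 a (a.1 + t, a.2 + σ * t) = σ / 2 := by
      unfold F16
      simp only [add_sub_cancel_left]
      rw [mul_pow, hσ]
      field_simp
      norm_num
    rwa [e] at h
  have h1 := key 1 (by norm_num)
  have h2 := key (-1) (by norm_num)
  rw [abs_le] at h1 h2
  linarith [h1.1, h1.2, h2.1, h2.2]

theorem hlp_relprime_lin (a b : ℝ) :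
    IsRelPrime (X 0 - C a : MvPolynomial (Fin 2) ℝ) (X 1 - C b) := by
  have hdeg : ∀ (i j : Fin 2) (c : ℝ), i ≠ j →
      degreeOf j (X i - C c : MvPolynomial (Fin 2) ℝ) = 0 := by
    intro i j c hij
    have h := degreeOf_sub_le j (X i : MvPolynomial (Fin 2) ℝ) (C c)
    rw [degreeOf_C, degreeOf_X_of_ne hij.symm] at h
    simpa using h
  have hnz : ∀ (i : Fin 2) (c : ℝ), (X i - C c : MvPolynomial (Fin 2) ℝ) ≠ 0 := by
    intro i c h
    have := congrArg (MvPolynomial.eval (fun _ => c + 1)) h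
    simp at this
  have hd : ∀ (j : Fin 2) (d p : MvPolynomial (Fin 2) ℝ), p ≠ 0 → degreeOf j p = 0 → d ∣ p →
      degreeOf j d = 0 := by
    rintro j d p hp h ⟨e, rfl⟩
    rw [degreeOf_mul_eq (left_ne_zero_of_mul hp) (right_ne_zero_of_mul hp)] at h
    omega
  intro d h1 h2
  have d1 := hd 1 d _ (hnz 0 a) (hdeg 0 1 a (by decide)) h1
  have d0 := hd 0 d _ (hnz 1 b) (hdeg 1 0 b (by decide)) h2
  have hd0 : d ≠ 0 := by
    rintro rfl
    exact hnz 0 a (zero_dvd_iff.mp h1)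
  have hC : d = C (coeff 0 d) := by
    rw [← totalDegree_eq_zero_iff_eq_C, totalDegree_eq_zero_iff]
    intro m hm i
    have := monomial_le_degreeOf i hm
    fin_cases i <;> simp_all
  rw [hC]
  apply IsUnit.map
  rw [isUnit_iff_ne_zero]
  intro h
  rw [h, C_0] at hC
  exact hd0 hC

theorem hlp_rat (a : ℝ × ℝ) : RatBoundedOnSq (F16 a) := by
  have hev : ∀ v, F16 a v = pev ((X 0 - C a.1) * (X 1 - C a.2)) v /
      pev ((X 0 - C a.1) ^ 2 + (X 1 - C a.2) ^ 2) v := by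
    intro v
    simp [F16, pev]
  refine ⟨(X 0 - C a.1) * (X 1 - C a.2), (X 0 - C a.1) ^ 2 + (X 1 - C a.2) ^ 2, ?_, ?_, ?_, hev⟩
  · intro h
    have := congrArg (MvPolynomial.eval ![a.1 + 1, a.2]) h
    simp at this
  · have h := hlp_relprime_lin a.1 a.2
    set P : MvPolynomial (Fin 2) ℝ := X 0 - C a.1
    set Q : MvPolynomial (Fin 2) ℝ := X 1 - C a.2
    have h1 : IsRelPrime P (P ^ 2 + Q ^ 2) := by
      intro d hd hd'
      have : d ∣ Q ^ 2 := (dvd_add_right (dvd_pow hd two_ne_zero)).mp hd'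
      exact (h.pow_right : IsRelPrime P (Q ^ 2)) hd this
    have h2 : IsRelPrime Q (P ^ 2 + Q ^ 2) := by
      intro d hd hd'
      have : d ∣ P ^ 2 := (dvd_add_left (dvd_pow hd two_ne_zero)).mp hd'
      exact (h.symm.pow_right : IsRelPrime Q (P ^ 2)) hd this
    intro d hd hd'
    exact (h1.mul_left h2) hd hd'
  · refine ⟨1 / 2, fun v _ => ?_⟩
    rw [← hev]
    exact hlp_bound a v

theorem hlp_sup (a b : ℝ × ℝ) (ha : a ∈ OpenSq) (hab : a ≠ b) :
    1 / 2 ≤ sSup ((fun v => |F16 a v - F16 b v|) '' ClosedSq) := by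
  apply hlp_sep a b ha hab
  intro v hv
  apply le_csSup _ (Set.mem_image_of_mem _ hv)
  refine ⟨1, ?_⟩
  rintro _ ⟨w, _, rfl⟩
  have h1 := abs_le.mp (hlp_bound a w)
  have h2 := abs_le.mp (hlp_bound b w)
  exact abs_le.mpr ⟨by linarith [h1.1, h2.2], by linarith [h1.2, h2.1]⟩

theorem hlp_mem (t : ℝ) (ht : t ∈ Set.Ioo (0 : ℝ) 1) : ((t, 1 / 2) : ℝ × ℝ) ∈ OpenSq :=
  ⟨ht, by norm_num⟩

theorem hlp_unc : ¬ (Set.Ioo (0 : ℝ) 1).Countable := by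
  intro h
  have := Cardinal.mk_Ioo_real (zero_lt_one (α := ℝ))
  have h2 := h.le_aleph0
  rw [this] at h2
  exact absurd h2 (not_le.mpr Cardinal.aleph0_lt_continuum)

/-- Each `f_a` is bounded by `1/2` on `[0,1]²`, distinct points give functions at uniform
distance at least `1/2`, hence there is an uncountable `1/2`-separated family of bounded
rational value-functions on `[0,1]²` and the set of all of them is not separable in the
uniform metric. -/
theorem f16_separated_family :
    (∀ a ∈ OpenSq, ∀ v ∈ ClosedSq, |F16 a v| ≤ 1 / 2) ∧
    (∀ a ∈ OpenSq, ∀ b ∈ OpenSq, a ≠ b →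
      1 / 2 ≤ sSup ((fun v => |F16 a v - F16 b v|) '' ClosedSq)) ∧
    (∃ S : Set (ℝ × ℝ → ℝ), ¬ S.Countable ∧ (∀ g ∈ S, RatBoundedOnSq g) ∧
      ∀ g ∈ S, ∀ h ∈ S, g ≠ h →
        1 / 2 ≤ sSup ((fun v => |g v - h v|) '' ClosedSq)) ∧
    ¬ ∃ D : Set (ℝ × ℝ → ℝ), D.Countable ∧ (∀ g ∈ D, RatBoundedOnSq g) ∧
      ∀ g : ℝ × ℝ → ℝ, RatBoundedOnSq g → ∀ ε : ℝ, 0 < ε →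
        ∃ h ∈ D, ∀ v ∈ ClosedSq, |g v - h v| < ε := by
  refine ⟨fun a _ v _ => hlp_bound a v, fun a ha b _ hab => hlp_sup a b ha hab, ?_, ?_⟩
  · refine ⟨(fun t : ℝ => F16 (t, 1 / 2)) '' Set.Ioo 0 1, ?_, ?_, ?_⟩
    · intro h
      refine hlp_unc (Set.countable_of_injective_of_countable_image ?_ h)
      intro s hs t _ hst
      by_contra hne
      have := hlp_sep (s, 1 / 2) (t, 1 / 2) (hlp_mem s hs) (by simpa using hne) 0 (by
        intro v _
        have := congrFun hst v
        simp only at this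
        rw [this]; simp)
      norm_num at this
    · rintro _ ⟨t, _, rfl⟩
      exact hlp_rat _
    · rintro _ ⟨s, hs, rfl⟩ _ ⟨t, ht, rfl⟩ hne
      apply hlp_sup _ _ (hlp_mem s hs)
      intro h
      exact hne (by simp only [h])
  · rintro ⟨D, hD, -, hdense⟩
    have hch : ∀ t : ℝ, ∃ h ∈ D, ∀ v ∈ ClosedSq, |F16 (t, 1 / 2) v - h v| < 1 / 8 :=
      fun t => hdense _ (hlp_rat _) _ (by norm_num)
    choose φ hφ hφ2 using hch
    have him : (φ '' Set.Ioo 0 1).Countable := by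
      apply hD.mono
      rintro _ ⟨t, _, rfl⟩
      exact hφ t
    refine hlp_unc (Set.countable_of_injective_of_countable_image ?_ him)
    intro s hs t _ hst
    by_contra hne
    have := hlp_sep (s, 1 / 2) (t, 1 / 2) (hlp_mem s hs) (by simpa using hne) (1 / 4) (by
      intro v hv
      have h1 := abs_lt.mp (hφ2 s v hv)
      have h2 := abs_lt.mp (hφ2 t v hv)
      rw [hst] at h1
      exact abs_le.mpr ⟨by linarith [h1.1, h2.2], by linarith [h1.2, h2.1]⟩)
    norm_num at this
end

section
/- Define g : ℝ² → ℝ by g(x,y) = e^{−1/x²}·y / (e^{−2/x²} + y²) for x ≠ 0, and g(x,y) = 0 for x = 0. Then: (a) |g(x,y)| ≤ 1/2 for all (x,y) ∈ ℝ²; (b) for every function Φ of type (i), lim_{x→0} g(x, Φ(x)) = 0; (c) lim_{x→0, x≠0} g(x, e^{−1/x²}) = 1/2, so g is discontinuous at (0,0) and its limits along all type-(i) curves exist although g has no limit at (0,0). -/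
open Filter Topology

/-- The function `g(x,y) = e^{-1/x²} y / (e^{-2/x²} + y²)` for `x ≠ 0`, and `0` for `x = 0`. -/
noncomputable def g17 (x y : ℝ) : ℝ :=
  if x = 0 then 0 else Real.exp (-1 / x ^ 2) * y / (Real.exp (-2 / x ^ 2) + y ^ 2)

lemma g17_bound (x y : ℝ) : |g17 x y| ≤ 1 / 2 := by
  unfold g17
  split_ifs with h
  · norm_num
  · have h2 : Real.exp (-2 / x ^ 2) = Real.exp (-1 / x ^ 2) ^ 2 := by
      rw [← Real.exp_nat_mul]; congr 1; push_cast; ring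
    rw [h2]
    have hE := Real.exp_pos (-1 / x ^ 2)
    generalize Real.exp (-1 / x ^ 2) = E at hE
    have hd : 0 < E ^ 2 + y ^ 2 := by positivity
    rw [abs_div, abs_of_pos hd, div_le_iff₀ hd, abs_le]
    constructor
    · nlinarith [sq_nonneg (E + y)]
    · nlinarith [sq_nonneg (E - y)]

lemma g17_exp_div (a : ℝ) :
    Tendsto (fun x : ℝ => Real.exp (-1 / x ^ 2) / |x| ^ a) (𝓝[≠] (0 : ℝ)) (𝓝 0) := by
  have hu : Tendsto (fun x : ℝ => (x ^ 2)⁻¹) (𝓝[≠] (0 : ℝ)) atTop := by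
    apply tendsto_inv_nhdsGT_zero.comp
    rw [tendsto_nhdsWithin_iff]
    constructor
    · have : Tendsto (fun x : ℝ => x ^ 2) (𝓝 0) (𝓝 (0 ^ 2)) := (continuous_pow 2).tendsto 0
      rw [zero_pow two_ne_zero] at this
      exact this.mono_left nhdsWithin_le_nhds
    · filter_upwards [self_mem_nhdsWithin] with x hx
      have : x ≠ 0 := hx
      show 0 < x ^ 2
      positivity
  have h := (tendsto_rpow_mul_exp_neg_mul_atTop_nhds_zero (a / 2) 1 one_pos).comp hu
  refine h.congr' ?_
  filter_upwards [self_mem_nhdsWithin] with x hx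
  have hx0 : x ≠ 0 := hx
  have hp : 0 < |x| := abs_pos.mpr hx0
  have h1 : ((x ^ 2)⁻¹) ^ (a / 2) = (|x| ^ a)⁻¹ := by
    rw [Real.inv_rpow (by positivity), ← sq_abs, ← Real.rpow_natCast, ← Real.rpow_mul hp.le]
    congr 2; push_cast; ring
  simp only [Function.comp]
  rw [h1, mul_comm, div_eq_mul_inv]
  congr 2
  

lemma g17_typeI (Φ : ℝ → ℝ) (hΦ : TypeI Φ) :
    Tendsto (fun x => g17 x (Φ x)) (𝓝[≠] (0 : ℝ)) (𝓝 0) := by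
  obtain ⟨N, φ, e, hφ, he, -, hs⟩ := hΦ
  rcases N with _ | N
  · have : (fun x => g17 x (Φ x)) = fun _ => 0 := by
      funext x; simp [g17, hs]
    rw [this]; exact tendsto_const_nhds
  have hlim : Tendsto (fun x => Φ x / |x| ^ (e 0 : ℝ)) (𝓝[≠] (0 : ℝ)) (𝓝 (φ 0)) := by
    have h1 : Tendsto (fun x : ℝ => φ 0 + ∑ k : Fin N, φ k.succ * |x| ^ ((e k.succ : ℝ) - e 0))
        (𝓝[≠] (0 : ℝ)) (𝓝 (φ 0 + ∑ k : Fin N, φ k.succ * 0)) := by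
      refine tendsto_const_nhds.add (tendsto_finsetSum _ fun k _ => ?_)
      refine tendsto_const_nhds.mul ?_
      have hlt : (0 : ℝ) < (e k.succ : ℝ) - e 0 := by
        have := he (Fin.succ_pos k)
        rw [sub_pos]; exact_mod_cast this
      have hc : Continuous fun x : ℝ => |x| ^ ((e k.succ : ℝ) - e 0) :=
        continuous_abs.rpow_const fun _ => Or.inr hlt.le
      have := hc.tendsto 0
      rw [abs_zero, Real.zero_rpow hlt.ne'] at this
      exact this.mono_left nhdsWithin_le_nhds
    simp only [mul_zero, Finset.sum_const_zero, add_zero] at h1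
    refine h1.congr' ?_
    filter_upwards [self_mem_nhdsWithin] with x hx
    have hp : 0 < |x| := abs_pos.mpr hx
    have hq : |x| ^ (e 0 : ℝ) ≠ 0 := (Real.rpow_pos_of_pos hp _).ne'
    rw [hs, Fin.sum_univ_succ, add_div, mul_div_assoc, div_self hq, mul_one, Finset.sum_div]
    congr 1
    refine Finset.sum_congr rfl fun k _ => ?_
    rw [Real.rpow_sub hp, mul_div_assoc]
  have hE := g17_exp_div (e 0)
  have h := (hE.mul hlim).div ((hE.pow 2).add (hlim.pow 2))
    (by simpa using hφ 0)
  rw [zero_mul, zero_div] at h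
  refine h.congr' ?_
  filter_upwards [self_mem_nhdsWithin] with x hx
  have hx0 : x ≠ 0 := hx
  have hp : 0 < |x| := abs_pos.mpr hx0
  have hq : 0 < |x| ^ (e 0 : ℝ) := Real.rpow_pos_of_pos hp _
  have h2 : Real.exp (-2 / x ^ 2) = Real.exp (-1 / x ^ 2) ^ 2 := by
    rw [← Real.exp_nat_mul]; congr 1; push_cast; ring
  simp only [g17, if_neg hx0, h2, Pi.div_apply]
  have hE := Real.exp_pos (-1 / x ^ 2)
  generalize Real.exp (-1 / x ^ 2) = E at hE
  generalize |x| ^ (e 0 : ℝ) = q at hq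
  have : 0 < E ^ 2 + Φ x ^ 2 := by positivity
  rw [div_pow, div_pow, ← add_div, div_mul_div_comm, ← sq, div_div_div_cancel_right₀ (by positivity)]

lemma g17_half :
    Tendsto (fun x => g17 x (Real.exp (-1 / x ^ 2))) (𝓝[≠] (0 : ℝ)) (𝓝 (1 / 2)) := by
  refine (tendsto_const_nhds (x := (1 / 2 : ℝ))).congr' ?_
  filter_upwards [self_mem_nhdsWithin] with x hx
  have hx0 : x ≠ 0 := hx
  have h2 : Real.exp (-2 / x ^ 2) = Real.exp (-1 / x ^ 2) ^ 2 := by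
    rw [← Real.exp_nat_mul]; congr 1; push_cast; ring
  simp only [g17, if_neg hx0, h2]
  have hE := Real.exp_pos (-1 / x ^ 2)
  generalize Real.exp (-1 / x ^ 2) = E at hE
  field_simp
  norm_num

lemma g17_no_limit : ¬ ∃ l : ℝ, Tendsto (fun v : ℝ × ℝ => g17 v.1 v.2)
    (𝓝[≠] ((0, 0) : ℝ × ℝ)) (𝓝 l) := by
  rintro ⟨l, hl⟩
  have key : ∀ f : ℝ → ℝ, Tendsto f (𝓝[≠] (0 : ℝ)) (𝓝 0) →
      Tendsto (fun x => g17 x (f x)) (𝓝[≠] (0 : ℝ)) (𝓝 l) := by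
    intro f hf
    have : Tendsto (fun x : ℝ => (x, f x)) (𝓝[≠] (0 : ℝ)) (𝓝[≠] ((0, 0) : ℝ × ℝ)) := by
      rw [tendsto_nhdsWithin_iff]
      constructor
      · have hid : Tendsto (fun x : ℝ => x) (𝓝[≠] (0 : ℝ)) (𝓝 0) :=
          tendsto_id.mono_left nhdsWithin_le_nhds
        exact hid.prodMk_nhds hf
      · filter_upwards [self_mem_nhdsWithin] with x hx h
        exact hx (congrArg Prod.fst h)
    exact hl.comp this
  have h0 : l = 0 := by
    refine tendsto_nhds_unique (key (fun _ => 0) tendsto_const_nhds) ?_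
    simp [g17]
  have h1 : l = 1 / 2 := by
    refine tendsto_nhds_unique (key (fun x => Real.exp (-1 / x ^ 2)) ?_) g17_half
    simpa using g17_exp_div 0
  norm_num [h0] at h1

/-- `g17` is bounded by `1/2`, tends to `0` along every type (i) curve, tends to `1/2`
along `y = e^{-1/x²}`, is discontinuous at the origin and has no limit there. -/
theorem g17_properties :
    (∀ x y : ℝ, |g17 x y| ≤ 1 / 2) ∧
    (∀ Φ : ℝ → ℝ, TypeI Φ → Tendsto (fun x => g17 x (Φ x)) (𝓝[≠] (0 : ℝ)) (𝓝 0)) ∧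
    Tendsto (fun x => g17 x (Real.exp (-1 / x ^ 2))) (𝓝[≠] (0 : ℝ)) (𝓝 (1 / 2)) ∧
    ¬ ContinuousAt (fun v : ℝ × ℝ => g17 v.1 v.2) ((0, 0) : ℝ × ℝ) ∧
    ¬ ∃ l : ℝ, Tendsto (fun v : ℝ × ℝ => g17 v.1 v.2)
        (𝓝[≠] ((0, 0) : ℝ × ℝ)) (𝓝 l) := by
  refine ⟨g17_bound, g17_typeI, g17_half, fun hc => g17_no_limit ⟨g17 0 0, ?_⟩, g17_no_limit⟩
  exact Tendsto.mono_left hc nhdsWithin_le_nhds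
end
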